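/- arXiv:2107.01082 — 13 statements merged into one kernel-verified Lean document; each statement's English description precedes it below -/
import Mathlib

section
/- For every initial value d₀ ∈ [0, ω₀] and every admissible source y there exists a continuous function ω : [0,T] → ℝ with 0 ≤ ω(t) ≤ ω₁ for all t ∈ [0,T] that solves the damage integral equation, i.e. ω(t) = d₀ + ∫₀ᵗ (1 − ω(ξ))^{−α} y(ξ) dξ for all t ∈ [0,T]. -/
open MeasureTheory Set

/-- `y` is an admissible source: measurable, and `0 ≤ y ≤ T⁻¹(ω₁ − ω₀)(1 − ω₁)^α`
a.e. on `[0, T]`. -/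
def AdmissibleSource (T a w0 w1 : ℝ) (y : ℝ → ℝ) : Prop :=
  Measurable y ∧
    ∀ᵐ t ∂(volume.restrict (Icc (0 : ℝ) T)),
      0 ≤ y t ∧ y t ≤ T⁻¹ * (w1 - w0) * (1 - w1) ^ a

/-- `ω` is a continuous solution of the damage integral equation
`ω(t) = d₀ + ∫₀ᵗ (1 − ω(ξ))^(−α) y(ξ) dξ` on `[0, T]`, with values in `[0, ω₁]`. -/
def SolvesDamage (T a w1 d0 : ℝ) (y ω : ℝ → ℝ) : Prop :=
  ContinuousOn ω (Icc (0 : ℝ) T) ∧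
  (∀ t ∈ Icc (0 : ℝ) T, ω t ∈ Icc (0 : ℝ) w1) ∧
  (∀ t ∈ Icc (0 : ℝ) T, ω t = d0 + ∫ ξ in (0 : ℝ)..t, (1 - ω ξ) ^ (-a) * y ξ)

/-- Existence of a solution to the damage integral equation. -/
theorem damage_integral_equation_existence
    (T a w0 w1 : ℝ) (hT : 0 < T) (ha : 1 ≤ a)
    (hw0 : 0 ≤ w0) (hw01 : w0 ≤ w1) (hw1 : w1 < 1)
    (d0 : ℝ) (hd0 : d0 ∈ Icc (0 : ℝ) w0)
    (y : ℝ → ℝ) (hy : AdmissibleSource T a w0 w1 y) :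
    ∃ ω : ℝ → ℝ, SolvesDamage T a w1 d0 y ω := by
  obtain ⟨hym, hyb⟩ := hy
  obtain ⟨hd1, hd2⟩ := hd0
  have h1w : 0 < 1 - w1 := by linarith
  obtain ⟨M, hM⟩ : ∃ M, M = T⁻¹ * (w1 - w0) * (1 - w1) ^ a := ⟨_, rfl⟩
  obtain ⟨C, hC⟩ : ∃ C, C = (1 - w1) ^ (-a) := ⟨_, rfl⟩
  rw [← hM] at hyb
  have hC0 : 0 < C := by rw [hC]; positivity
  have hM0 : 0 ≤ M := by
    have : 0 ≤ w1 - w0 := by linarith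
    rw [hM]; positivity
  have hCMT : C * M * T = w1 - w0 := by
    have : (1 - w1) ^ (-a) * (1 - w1) ^ a = 1 := by
      rw [← Real.rpow_add h1w]; simp
    rw [hC, hM]
    calc _ = ((1 - w1) ^ (-a) * (1 - w1) ^ a) * (T⁻¹ * T) * (w1 - w0) := by ring
      _ = _ := by rw [this, inv_mul_cancel₀ hT.ne']; ring
  -- truncated source
  obtain ⟨z, hz⟩ : ∃ z : ℝ → ℝ, z = fun t => max 0 (min (y t) M) := ⟨_, rfl⟩
  have hzm : Measurable z := by rw [hz]; fun_prop
  have hz0 : ∀ t, 0 ≤ z t := fun t => by rw [hz]; exact le_max_left _ _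
  have hzM : ∀ t, z t ≤ M := fun t => by rw [hz]; exact max_le hM0 (min_le_right _ _)
  have hzy : ∀ᵐ t ∂(volume.restrict (Icc (0 : ℝ) T)), z t = y t := by
    filter_upwards [hyb] with t ht
    rw [hz]; simp [min_eq_left ht.2, ht.1]
  obtain ⟨p, hp⟩ : ∃ p : ℝ → ℝ, p = fun t => max 0 (min t T) := ⟨_, rfl⟩
  have hpc : Continuous p := by rw [hp]; fun_prop
  have hp0 : ∀ t, 0 ≤ p t := fun t => by rw [hp]; exact le_max_left _ _
  have hpT : ∀ t, p t ≤ T := fun t => by rw [hp]; exact max_le hT.le (min_le_right _ _)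
  have hpid : ∀ t ∈ Icc (0 : ℝ) T, p t = t := fun t ht => by
    rw [hp]; simp [min_eq_left ht.2, ht.1]
  obtain ⟨F, hF⟩ : ∃ F : (ℝ → ℝ) → ℝ → ℝ,
    F = fun w t => d0 + ∫ ξ in (0 : ℝ)..p t, (1 - w ξ) ^ (-a) * z ξ := ⟨_, rfl⟩
  let Good : (ℝ → ℝ) → Prop := fun w => Measurable w ∧ ∀ t, w t ∈ Icc (0 : ℝ) w1
  have hmono : ∀ u v : ℝ, u ≤ v → v ≤ w1 → (1 - u) ^ (-a) ≤ (1 - v) ^ (-a) := by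
    intro u v huv hv
    exact Real.rpow_le_rpow_of_nonpos (by linarith) (by linarith) (by linarith)
  have hg0 : ∀ u : ℝ, u ≤ w1 → 0 ≤ (1 - u) ^ (-a) := fun u hu =>
    Real.rpow_nonneg (by linarith) _
  have hgC : ∀ u : ℝ, u ≤ w1 → (1 - u) ^ (-a) ≤ C := fun u hu => by
    rw [hC]; exact hmono _ _ hu le_rfl
  have hmeas : ∀ w, Measurable w → Measurable (fun ξ => (1 - w ξ) ^ (-a) * z ξ) := by
    intro w hw; fun_prop
  have hnn : ∀ w, Good w → ∀ ξ, 0 ≤ (1 - w ξ) ^ (-a) * z ξ := fun w hw ξ =>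
    mul_nonneg (hg0 _ (hw.2 ξ).2) (hz0 ξ)
  have hle : ∀ w, Good w → ∀ ξ, (1 - w ξ) ^ (-a) * z ξ ≤ C * M := fun w hw ξ =>
    mul_le_mul (hgC _ (hw.2 ξ).2) (hzM ξ) (hz0 ξ) hC0.le
  have hnorm : ∀ w, Good w → ∀ ξ, ‖(1 - w ξ) ^ (-a) * z ξ‖ ≤ C * M := fun w hw ξ => by
    rw [Real.norm_of_nonneg (hnn w hw ξ)]; exact hle w hw ξ
  have hint : ∀ w, Good w → ∀ s t : ℝ,
      IntervalIntegrable (fun ξ => (1 - w ξ) ^ (-a) * z ξ) volume s t := by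
    intro w hw s t
    refine (intervalIntegrable_const (c := C * M)).mono_fun
      (hmeas w hw.1).aestronglyMeasurable (Filter.Eventually.of_forall fun ξ => ?_)
    exact (hnorm w hw ξ).trans (le_abs_self _)
  have hFc : ∀ w, Good w → Continuous (F w) := by
    intro w hw
    rw [hF]
    exact continuous_const.add
      ((intervalIntegral.continuous_primitive (hint w hw) 0).comp hpc)
  have hFG : ∀ w, Good w → Good (F w) := by
    intro w hw
    refine ⟨(hFc w hw).measurable, fun t => ?_⟩
    have h1 : 0 ≤ ∫ ξ in (0 : ℝ)..p t, (1 - w ξ) ^ (-a) * z ξ :=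
      intervalIntegral.integral_nonneg (hp0 t) fun ξ _ => hnn w hw ξ
    have h2 : ∫ ξ in (0 : ℝ)..p t, (1 - w ξ) ^ (-a) * z ξ ≤ ∫ ξ in (0 : ℝ)..p t, C * M :=
      intervalIntegral.integral_mono_on (hp0 t) (hint w hw _ _)
        intervalIntegrable_const fun ξ _ => hle w hw ξ
    have h3 : ∫ ξ in (0 : ℝ)..p t, C * M ≤ C * M * T := by
      rw [intervalIntegral.integral_const]
      simp only [sub_zero, smul_eq_mul]
      rw [mul_comm]
      exact mul_le_mul_of_nonneg_left (hpT t) (by positivity)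
    rw [hF]
    constructor
    · show 0 ≤ d0 + _
      linarith
    · show d0 + _ ≤ w1
      linarith
  have hFm : ∀ v w, Good v → Good w → (∀ t, v t ≤ w t) → ∀ t, F v t ≤ F w t := by
    intro v w hv hw hvw t
    rw [hF]
    refine add_le_add le_rfl ?_
    refine intervalIntegral.integral_mono_on (hp0 t) (hint v hv _ _) (hint w hw _ _) fun ξ _ => ?_
    exact mul_le_mul_of_nonneg_right (hmono _ _ (hvw ξ) (hw.2 ξ).2) (hz0 ξ)
  let W : ℕ → ℝ → ℝ := fun n => F^[n] (fun _ => 0)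
  have hWs : ∀ n, W (n + 1) = F (W n) := fun n => Function.iterate_succ_apply' F n _
  have hWG : ∀ n, Good (W n) := by
    intro n
    induction n with
    | zero => exact ⟨measurable_const, fun t => ⟨le_rfl, by show (0:ℝ) ≤ w1; linarith⟩⟩
    | succ n ih => rw [hWs]; exact hFG _ ih
  have hWm : ∀ n t, W n t ≤ W (n + 1) t := by
    intro n
    induction n with
    | zero => intro t; exact ((hWG 1).2 t).1
    | succ n ih =>
      intro t
      have := hFm _ _ (hWG n) (hWG (n + 1)) ih t
      rwa [← hWs, ← hWs] at this
  let w : ℝ → ℝ := fun t => ⨆ n, W n t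
  have hlim : ∀ t, Filter.Tendsto (fun n => W n t) Filter.atTop (nhds (w t)) := by
    intro t
    refine tendsto_atTop_ciSup (monotone_nat_of_le_succ fun n => hWm n t) ⟨w1, ?_⟩
    rintro _ ⟨n, rfl⟩
    exact ((hWG n).2 t).2
  have hwG : Good w :=
    ⟨measurable_of_tendsto_metrizable (fun n => (hWG n).1) (tendsto_pi_nhds.2 hlim),
      fun t => isClosed_Icc.mem_of_tendsto (hlim t)
        (Filter.Eventually.of_forall fun n => (hWG n).2 t)⟩
  have hfix : ∀ t, w t = F w t := by
    intro t
    have h1 : Filter.Tendsto (fun n => F (W n) t) Filter.atTop (nhds (F w t)) := by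
      rw [hF]
      refine Filter.Tendsto.const_add _ ?_
      refine intervalIntegral.tendsto_integral_filter_of_dominated_convergence
        (fun _ => C * M) ?_ ?_ intervalIntegrable_const ?_
      · exact Filter.Eventually.of_forall fun n => (hmeas _ (hWG n).1).aestronglyMeasurable
      · exact Filter.Eventually.of_forall fun n => Filter.Eventually.of_forall fun ξ _ =>
          hnorm _ (hWG n) ξ
      · refine Filter.Eventually.of_forall fun ξ _ => ?_
        refine Filter.Tendsto.mul_const _ ?_
        refine Filter.Tendsto.rpow_const ((hlim ξ).const_sub 1) (Or.inl ?_)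
        have := (hwG.2 ξ).2
        linarith
    have h2 := (Filter.tendsto_add_atTop_iff_nat 1).2 (hlim t)
    simp only [hWs] at h2
    exact tendsto_nhds_unique h2 h1
  refine ⟨w, ?_, fun t _ => hwG.2 t, fun t ht => ?_⟩
  · have : w = F w := funext hfix
    rw [this]
    exact (hFc w hwG).continuousOn
  · rw [hfix t, hF]
    show d0 + _ = _
    rw [hpid t ht]
    congr 1
    refine intervalIntegral.integral_congr_ae ?_
    filter_upwards [(ae_restrict_iff' measurableSet_Icc).1 hzy] with ξ hξ hm
    rw [uIoc_of_le ht.1] at hm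
    rw [hξ ⟨hm.1.le, hm.2.trans ht.2⟩]
end

section
/- If ω₁ and ω₂ are two continuous functions [0,T] → ℝ that both solve the damage integral equation with the same initial value d₀ ∈ [0, ω₀] and the same admissible source y, then ω₁(t) = ω₂(t) for all t ∈ [0,T]. -/
open MeasureTheory Set

/-- Uniqueness of solutions of the damage integral equation with the same data. -/
theorem damage_integral_equation_uniqueness
    (T a w0 w1 : ℝ) (hT : 0 < T) (ha : 1 ≤ a)
    (hw0 : 0 ≤ w0) (hw01 : w0 ≤ w1) (hw1 : w1 < 1)
    (d0 : ℝ) (hd0 : d0 ∈ Icc (0 : ℝ) w0)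
    (y : ℝ → ℝ) (hy : AdmissibleSource T a w0 w1 y)
    (u1 u2 : ℝ → ℝ)
    (h1 : SolvesDamage T a w1 d0 y u1) (h2 : SolvesDamage T a w1 d0 y u2) :
    ∀ t ∈ Icc (0 : ℝ) T, u1 t = u2 t := by
  obtain ⟨hym, hyb⟩ := hy
  obtain ⟨c1, b1, e1⟩ := h1
  obtain ⟨c2, b2, e2⟩ := h2
  set M := T⁻¹ * (w1 - w0) * (1 - w1) ^ a with hM
  have hM0 : 0 ≤ M := by
    have : 0 ≤ (1 - w1) ^ a := Real.rpow_nonneg (by linarith) _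
    have h2 : 0 ≤ w1 - w0 := by linarith
    positivity
  set L := a * (1 - w1) ^ (-a - 1) with hL
  have hL0 : 0 ≤ L := by
    have : 0 ≤ (1 - w1) ^ (-a - 1) := Real.rpow_nonneg (by linarith) _
    positivity
  have lip : ∀ x ∈ Icc (0:ℝ) w1, ∀ z ∈ Icc (0:ℝ) w1,
      ‖(1 - x) ^ (-a) - (1 - z) ^ (-a)‖ ≤ L * ‖x - z‖ := by
    intro x hx z hz
    refine (convex_Icc (0:ℝ) w1).norm_image_sub_le_of_norm_hasDerivWithin_le
      (f := fun x => (1 - x) ^ (-a)) (f' := fun x => (-1) * (-a) * (1 - x) ^ (-a - 1))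
      ?_ ?_ hz hx
    · intro v hv
      have hv1 : 1 - v ≠ 0 := by have := hv.2; intro h; linarith
      exact (((hasDerivAt_id v).const_sub 1).rpow_const (Or.inl hv1)).hasDerivWithinAt
    · intro v hv
      have h1v : 0 < 1 - v := by linarith [hv.2]
      have hp : 0 ≤ (1 - v) ^ (-a - 1) := Real.rpow_nonneg h1v.le _
      have : (-1) * (-a) * (1 - v) ^ (-a - 1) = a * (1 - v) ^ (-a - 1) := by ring
      rw [this, Real.norm_of_nonneg (by positivity)]
      refine mul_le_mul_of_nonneg_left ?_ (by linarith)
      exact Real.rpow_le_rpow_of_nonpos (by linarith) (by linarith [hv.2]) (by linarith)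
  have yint : IntegrableOn y (Icc 0 T) := by
    refine Measure.integrableOn_of_bounded (M := M) (by simp) hym.aestronglyMeasurable ?_
    filter_upwards [hyb] with t ht
    rw [Real.norm_of_nonneg ht.1]; exact ht.2
  have fint : ∀ u : ℝ → ℝ, ContinuousOn u (Icc 0 T) → (∀ t ∈ Icc (0 : ℝ) T, u t ∈ Icc (0 : ℝ) w1) →
      ∀ t ∈ Icc (0:ℝ) T, IntervalIntegrable (fun ξ => (1 - u ξ) ^ (-a) * y ξ) volume 0 t := by
    intro u hc hb t ht
    have hi : IntegrableOn (fun ξ => (1 - u ξ) ^ (-a) * y ξ) (Icc 0 T) := by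
      refine IntegrableOn.continuousOn_mul ?_ yint isCompact_Icc
      refine (continuousOn_const.sub hc).rpow_const ?_
      intro x hx
      left
      have := (hb x hx).2
      intro h; simp at h; linarith
    rw [intervalIntegrable_iff_integrableOn_Icc_of_le ht.1]
    exact hi.mono_set (Icc_subset_Icc_right ht.2)
  set g : ℝ → ℝ := IccExtend hT.le ((Icc (0:ℝ) T).restrict fun t => |u1 t - u2 t|) with hg
  have gc : Continuous g := (continuousOn_iff_continuous_restrict.1 (c1.sub c2).abs).Icc_extend'
  have ge : ∀ t ∈ Icc (0:ℝ) T, g t = |u1 t - u2 t| := by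
    intro t ht
    rw [hg, IccExtend_of_mem _ _ ht]; rfl
  have key : ∀ t ∈ Icc (0:ℝ) T, g t ≤ (L * M) * ∫ ξ in (0:ℝ)..t, g ξ := by
    intro t ht
    rw [ge t ht, e1 t ht, e2 t ht, add_sub_add_left_eq_sub,
      ← intervalIntegral.integral_sub (fint u1 c1 b1 t ht) (fint u2 c2 b2 t ht),
      ← intervalIntegral.integral_const_mul, ← Real.norm_eq_abs]
    refine intervalIntegral.norm_integral_le_of_norm_le ht.1 ?_
      ((gc.const_mul _).intervalIntegrable _ _)
    rw [ae_restrict_iff' measurableSet_Icc] at hyb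
    filter_upwards [hyb] with s hs hst
    have hsT : s ∈ Icc (0:ℝ) T := ⟨hst.1.le, hst.2.trans ht.2⟩
    obtain ⟨p, q⟩ := hs hsT
    rw [← sub_mul, norm_mul, Real.norm_of_nonneg p, ge s hsT]
    calc _ ≤ (L * ‖u1 s - u2 s‖) * M :=
          mul_le_mul (lip _ (b1 s hsT) _ (b2 s hsT)) q p (by positivity)
      _ = _ := by rw [Real.norm_eq_abs]; ring
  have g0 : ∀ t ∈ Icc (0:ℝ) T, 0 ≤ g t := fun t ht => by rw [ge t ht]; positivity
  have F0 : ∀ t ∈ Icc (0:ℝ) T, ‖∫ ξ in (0:ℝ)..t, g ξ‖ ≤ gronwallBound 0 (L * M) 0 (t - 0) := by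
    refine norm_le_gronwallBound_of_norm_deriv_right_le (f' := g) ?_ ?_ (by simp) ?_
    · exact (intervalIntegral.continuous_primitive (fun a b => gc.intervalIntegrable a b) 0).continuousOn
    · intro x hx
      exact (gc.integral_hasStrictDerivAt 0 x).hasDerivAt.hasDerivWithinAt
    · intro x hx
      have hx' := Ico_subset_Icc_self hx
      rw [Real.norm_of_nonneg (g0 x hx'), add_zero]
      exact (key x hx').trans (mul_le_mul_of_nonneg_left (le_abs_self _) (by positivity))
  intro t ht
  have hF := F0 t ht
  rw [gronwallBound_ε0_δ0] at hF
  have hF' := norm_le_zero_iff.1 hF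
  have hk := key t ht
  rw [hF', mul_zero, ge t ht] at hk
  exact sub_eq_zero.1 (abs_nonpos_iff.1 hk)
end

section
/- Any continuous solution ω of the damage integral equation with initial value d₀ ∈ [0, ω₀] and admissible source y is Lipschitz continuous in time with Lipschitz constant T⁻¹(ω₁ − ω₀), i.e. |ω(t₁) − ω(t₂)| ≤ T⁻¹(ω₁ − ω₀)·|t₁ − t₂| for all t₁, t₂ ∈ [0,T]. -/
open MeasureTheory Set

/-- Solutions of the damage integral equation are Lipschitz continuous in time
with Lipschitz constant `T⁻¹(ω₁ − ω₀)`. -/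
theorem damage_solution_lipschitz_in_time
    (T a w0 w1 : ℝ) (hT : 0 < T) (ha : 1 ≤ a)
    (hw0 : 0 ≤ w0) (hw01 : w0 ≤ w1) (hw1 : w1 < 1)
    (d0 : ℝ) (hd0 : d0 ∈ Icc (0 : ℝ) w0)
    (y : ℝ → ℝ) (hy : AdmissibleSource T a w0 w1 y)
    (ω : ℝ → ℝ) (hω : SolvesDamage T a w1 d0 y ω) :
    ∀ t₁ ∈ Icc (0 : ℝ) T, ∀ t₂ ∈ Icc (0 : ℝ) T,
      |ω t₁ - ω t₂| ≤ T⁻¹ * (w1 - w0) * |t₁ - t₂| := by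
  obtain ⟨hym, hyb⟩ := hy
  obtain ⟨hc, hr, he⟩ := hω
  have hpos : ∀ t ∈ Icc (0 : ℝ) T, 0 < 1 - ω t := fun t ht => by
    have := (hr t ht).2
    linarith
  have hcont : ContinuousOn (fun ξ => (1 - ω ξ) ^ (-a)) (Icc (0 : ℝ) T) :=
    (continuousOn_const.sub hc).rpow_const (fun t ht => Or.inl (hpos t ht).ne')
  have hbound : ∀ᵐ t ∂(volume.restrict (Icc (0 : ℝ) T)),
      ‖(1 - ω t) ^ (-a) * y t‖ ≤ T⁻¹ * (w1 - w0) := by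
    filter_upwards [hyb, ae_restrict_mem measurableSet_Icc] with t h ht
    have hp := hpos t ht
    have h1 : 0 < 1 - w1 := by linarith
    have hle : 1 - w1 ≤ 1 - ω t := by
      have := (hr t ht).2
      linarith
    have hpw : 0 < (1 - ω t) ^ (-a) := Real.rpow_pos_of_pos hp _
    have hpw1 : 0 < (1 - w1) ^ a := Real.rpow_pos_of_pos h1 _
    rw [Real.norm_of_nonneg (mul_nonneg hpw.le h.1)]
    have hmono : (1 - ω t) ^ (-a) ≤ (1 - w1) ^ (-a) :=
      Real.rpow_le_rpow_of_nonpos h1 hle (by linarith)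
    calc (1 - ω t) ^ (-a) * y t
        ≤ (1 - w1) ^ (-a) * (T⁻¹ * (w1 - w0) * (1 - w1) ^ a) :=
          mul_le_mul hmono h.2 h.1 (hpw.le.trans hmono)
      _ = T⁻¹ * (w1 - w0) := by
          rw [Real.rpow_neg h1.le]
          field_simp
  have hint : IntegrableOn (fun ξ => (1 - ω ξ) ^ (-a) * y ξ) (Icc (0 : ℝ) T) := by
    refine IntegrableOn.of_bound (by simp) ?_ _ hbound
    exact (hcont.aestronglyMeasurable measurableSet_Icc).mul hym.aestronglyMeasurable
  have hii : ∀ s ∈ Icc (0 : ℝ) T, ∀ t ∈ Icc (0 : ℝ) T,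
      IntervalIntegrable (fun ξ => (1 - ω ξ) ^ (-a) * y ξ) volume s t := by
    intro s hs t ht
    exact (hint.mono_set (uIcc_subset_Icc hs ht)).intervalIntegrable
  intro t₁ h₁ t₂ h₂
  have h0 : (0 : ℝ) ∈ Icc (0 : ℝ) T := ⟨le_rfl, hT.le⟩
  rw [he t₁ h₁, he t₂ h₂, add_sub_add_left_eq_sub,
    intervalIntegral.integral_interval_sub_left (hii 0 h0 t₁ h₁) (hii 0 h0 t₂ h₂),
    ← Real.norm_eq_abs]
  refine intervalIntegral.norm_integral_le_of_norm_le_const_ae ?_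
  have hb := (ae_restrict_iff' measurableSet_Icc).1 hbound
  filter_upwards [hb] with t h ht
  exact h (uIcc_subset_Icc h₂ h₁ (uIoc_subset_uIcc ht))
end

section
/- For every continuous function ω : [0,T] → ℝ with 0 ≤ ω(t) ≤ ω₁ for all t, every initial value d₀ ∈ [0, ω₀] and every admissible source y, the function Oω satisfies 0 ≤ (Oω)(t) ≤ ω₁ for every t ∈ [0,T]; i.e. the operator O maps the set of continuous functions with values in [0, ω₁] into itself. -/
open MeasureTheory Set

/-- The fixed-point operator `(Oω)(t) = d₀ + ∫₀ᵗ (1 − ω(ξ))^(−α) y(ξ) dξ`. -/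
noncomputable def damageOp (a d0 : ℝ) (y ω : ℝ → ℝ) (t : ℝ) : ℝ :=
  d0 + ∫ ξ in (0 : ℝ)..t, (1 - ω ξ) ^ (-a) * y ξ

/-- The operator `O` maps continuous functions on `[0,T]` with values in `[0, ω₁]`
into themselves. -/
theorem damageOp_maps_into_itself
    (T a w0 w1 : ℝ) (hT : 0 < T) (ha : 1 ≤ a)
    (hw0 : 0 ≤ w0) (hw01 : w0 ≤ w1) (hw1 : w1 < 1)
    (d0 : ℝ) (hd0 : d0 ∈ Icc (0 : ℝ) w0)
    (y : ℝ → ℝ) (hy : AdmissibleSource T a w0 w1 y)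
    (ω : ℝ → ℝ) (hωc : ContinuousOn ω (Icc (0 : ℝ) T))
    (hωb : ∀ t ∈ Icc (0 : ℝ) T, ω t ∈ Icc (0 : ℝ) w1) :
    ContinuousOn (damageOp a d0 y ω) (Icc (0 : ℝ) T) ∧
      ∀ t ∈ Icc (0 : ℝ) T, 0 ≤ damageOp a d0 y ω t ∧ damageOp a d0 y ω t ≤ w1 := by
  obtain ⟨hym, hyb⟩ := hy
  obtain ⟨hd1, hd2⟩ := hd0
  have hae : ∀ᵐ t ∂(volume.restrict (Icc (0 : ℝ) T)),
      0 ≤ (1 - ω t) ^ (-a) * y t ∧ (1 - ω t) ^ (-a) * y t ≤ T⁻¹ * (w1 - w0) := by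
    filter_upwards [hyb, ae_restrict_mem measurableSet_Icc] with t ht htm
    have hb := hωb t htm
    have h1 : 0 < 1 - w1 := by linarith
    have h2 : 1 - w1 ≤ 1 - ω t := by linarith [hb.2]
    have h3 : 0 < 1 - ω t := by linarith
    have hp : 0 ≤ (1 - ω t) ^ (-a) := Real.rpow_nonneg h3.le _
    refine ⟨mul_nonneg hp ht.1, ?_⟩
    have hle : (1 - ω t) ^ (-a) ≤ (1 - w1) ^ (-a) :=
      Real.rpow_le_rpow_of_nonpos h1 h2 (by linarith)
    calc (1 - ω t) ^ (-a) * y t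
        ≤ (1 - w1) ^ (-a) * (T⁻¹ * (w1 - w0) * (1 - w1) ^ a) :=
          mul_le_mul hle ht.2 ht.1 (Real.rpow_nonneg h1.le _)
      _ = T⁻¹ * (w1 - w0) * ((1 - w1) ^ (-a) * (1 - w1) ^ a) := by ring
      _ = T⁻¹ * (w1 - w0) := by
          rw [← Real.rpow_add h1]; simp
  have hmeas : AEStronglyMeasurable (fun t => (1 - ω t) ^ (-a) * y t)
      (volume.restrict (Icc (0 : ℝ) T)) := by
    refine AEStronglyMeasurable.mul ?_ hym.aestronglyMeasurable
    refine ContinuousOn.aestronglyMeasurable ?_ measurableSet_Icc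
    refine (continuousOn_const.sub hωc).rpow_const ?_
    intro t ht
    left
    have := (hωb t ht).2
    change 1 - ω t ≠ 0
    have h3 : 0 < 1 - ω t := by linarith
    exact h3.ne'
  have hint : IntegrableOn (fun t => (1 - ω t) ^ (-a) * y t) (Icc (0 : ℝ) T) := by
    refine Integrable.of_bound hmeas (T⁻¹ * (w1 - w0)) ?_
    filter_upwards [hae] with t ht
    rw [Real.norm_eq_abs, abs_of_nonneg ht.1]
    exact ht.2
  refine ⟨?_, ?_⟩
  · unfold damageOp
    refine continuousOn_const.add ?_
    have := intervalIntegral.continuousOn_primitive_interval (μ := volume) (a := 0) (b := T)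
      (f := fun t => (1 - ω t) ^ (-a) * y t) (by rwa [uIcc_of_le hT.le])
    rwa [uIcc_of_le hT.le] at this
  · intro t ht
    have hsub : Icc 0 t ⊆ Icc 0 T := Icc_subset_Icc_right ht.2
    have hae' := ae_restrict_of_ae_restrict_of_subset hsub hae
    have hi : IntervalIntegrable (fun t => (1 - ω t) ^ (-a) * y t) volume 0 t :=
      (intervalIntegrable_iff_integrableOn_Icc_of_le ht.1).2 (hint.mono_set hsub)
    have hlo : 0 ≤ ∫ ξ in (0 : ℝ)..t, (1 - ω ξ) ^ (-a) * y ξ :=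
      intervalIntegral.integral_nonneg_of_ae_restrict ht.1 (hae'.mono fun _ h => h.1)
    have hhi : (∫ ξ in (0 : ℝ)..t, (1 - ω ξ) ^ (-a) * y ξ)
        ≤ ∫ _ in (0 : ℝ)..t, T⁻¹ * (w1 - w0) :=
      intervalIntegral.integral_mono_ae_restrict ht.1 hi (by simp) (hae'.mono fun _ h => h.2)
    have hc : (∫ _ in (0 : ℝ)..t, T⁻¹ * (w1 - w0)) ≤ w1 - w0 := by
      rw [intervalIntegral.integral_const, smul_eq_mul, sub_zero, ← mul_assoc]
      have h1 : t * T⁻¹ ≤ 1 := by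
        rw [← div_eq_mul_inv]; exact (div_le_one hT).2 ht.2
      exact mul_le_of_le_one_left (by linarith) h1
    unfold damageOp
    constructor <;> linarith
end

section
/- For all continuous functions ω₁, ω₂ : [0,T] → ℝ with values in [0, ω₁], every d₀ ∈ [0, ω₀], every admissible source y and every t ∈ [0,T] one has |(Oω₁)(t) − (Oω₂)(t)| ≤ α·T⁻¹(ω₁ − ω₀)(1 − ω₁)^{−1} · ∫₀ᵗ |ω₁(ξ) − ω₂(ξ)| dξ; in particular |(Oω₁)(t) − (Oω₂)(t)| ≤ α(ω₁ − ω₀)(1 − ω₁)^{−1} · max_{s∈[0,T]} |ω₁(s) − ω₂(s)|. -/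
open MeasureTheory Set

theorem rpow_lip_aux (a w1 : ℝ) (ha : 1 ≤ a) (hw1 : w1 < 1) (x z : ℝ)
    (hx : x ∈ Icc (0 : ℝ) w1) (hz : z ∈ Icc (0 : ℝ) w1) :
    |(1 - x) ^ (-a) - (1 - z) ^ (-a)| ≤ a * (1 - w1) ^ (-a - 1) * |x - z| := by
  have h := Convex.norm_image_sub_le_of_norm_hasDerivWithin_le (𝕜 := ℝ)
    (f := fun s : ℝ => (1 - s) ^ (-a)) (f' := fun s => (-1) * (-a) * (1 - s) ^ (-a - 1))
    (s := Icc (0 : ℝ) w1) (C := a * (1 - w1) ^ (-a - 1)) (x := z) (y := x)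
    (fun s hs => by
      have h1 : HasDerivAt (fun s : ℝ => 1 - s) (-1) s := by
        simpa using (hasDerivAt_id s).const_sub 1
      have h2 : 1 - s ≠ 0 := by have := hs.2; linarith
      exact (h1.rpow_const (Or.inl h2)).hasDerivWithinAt)
    (fun s hs => by
      have h3 : 0 < 1 - w1 := by linarith
      have h4 : 1 - w1 ≤ 1 - s := by have := hs.2; linarith
      have h5 : 0 ≤ (1 - s) ^ (-a - 1) := Real.rpow_nonneg (by linarith) _
      have h6 : (1 - s) ^ (-a - 1) ≤ (1 - w1) ^ (-a - 1) :=
        Real.rpow_le_rpow_of_nonpos h3 h4 (by linarith)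
      have h7 : (-1) * (-a) * (1 - s) ^ (-a - 1) = a * (1 - s) ^ (-a - 1) := by ring
      rw [h7, Real.norm_eq_abs, abs_of_nonneg (by positivity)]
      gcongr)
    (convex_Icc 0 w1) hz hx
  simpa [Real.norm_eq_abs] using h

/-- Integral Lipschitz estimate for the fixed-point operator `O`. -/
theorem damageOp_lipschitz_estimate
    (T a w0 w1 : ℝ) (hT : 0 < T) (ha : 1 ≤ a)
    (hw0 : 0 ≤ w0) (hw01 : w0 ≤ w1) (hw1 : w1 < 1)
    (d0 : ℝ) (hd0 : d0 ∈ Icc (0 : ℝ) w0)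
    (y : ℝ → ℝ) (hy : AdmissibleSource T a w0 w1 y)
    (u1 u2 : ℝ → ℝ)
    (hc1 : ContinuousOn u1 (Icc (0 : ℝ) T)) (hc2 : ContinuousOn u2 (Icc (0 : ℝ) T))
    (hb1 : ∀ t ∈ Icc (0 : ℝ) T, u1 t ∈ Icc (0 : ℝ) w1)
    (hb2 : ∀ t ∈ Icc (0 : ℝ) T, u2 t ∈ Icc (0 : ℝ) w1) :
    ∀ t ∈ Icc (0 : ℝ) T,
      |damageOp a d0 y u1 t - damageOp a d0 y u2 t| ≤
        a * T⁻¹ * (w1 - w0) * (1 - w1)⁻¹ * ∫ ξ in (0 : ℝ)..t, |u1 ξ - u2 ξ| ∧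
      |damageOp a d0 y u1 t - damageOp a d0 y u2 t| ≤
        a * (w1 - w0) * (1 - w1)⁻¹ * sSup ((fun s => |u1 s - u2 s|) '' Icc (0 : ℝ) T) := by
  intro t ht
  obtain ⟨hym, hyb⟩ := hy
  have hsub : Icc (0 : ℝ) t ⊆ Icc 0 T := Icc_subset_Icc_right ht.2
  have hpos : 0 < 1 - w1 := by linarith
  have hyb' : ∀ᵐ s ∂(volume.restrict (Icc (0 : ℝ) t)),
      0 ≤ y s ∧ y s ≤ T⁻¹ * (w1 - w0) * (1 - w1) ^ a :=
    ae_restrict_of_ae_restrict_of_subset hsub hyb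
  have hyint : IntegrableOn y (Icc 0 t) := by
    refine Integrable.of_bound (μ := volume.restrict (Icc (0 : ℝ) t))
      hym.aestronglyMeasurable (T⁻¹ * (w1 - w0) * (1 - w1) ^ a) ?_
    filter_upwards [hyb'] with s hs
    rw [Real.norm_eq_abs, abs_of_nonneg hs.1]
    exact hs.2
  have hint : ∀ u : ℝ → ℝ, ContinuousOn u (Icc (0 : ℝ) T) →
      (∀ t ∈ Icc (0 : ℝ) T, u t ∈ Icc (0 : ℝ) w1) →
      IntervalIntegrable (fun ξ => (1 - u ξ) ^ (-a) * y ξ) volume 0 t := by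
    intro u hc hb
    rw [intervalIntegrable_iff_integrableOn_Icc_of_le ht.1]
    refine hyint.continuousOn_mul ?_ isCompact_Icc
    refine ContinuousOn.rpow_const ((continuousOn_const.sub hc).mono hsub) ?_
    intro s hs
    left
    have := (hb s (hsub hs)).2
    show (1 : ℝ) - u s ≠ 0
    linarith
  have hdc : ContinuousOn (fun s => |u1 s - u2 s|) (Icc (0 : ℝ) T) := (hc1.sub hc2).abs
  have hdint : IntervalIntegrable (fun s => |u1 s - u2 s|) volume 0 t :=
    (hdc.mono hsub).intervalIntegrable_of_Icc ht.1
  have hconst : a * (1 - w1) ^ (-a - 1) * (T⁻¹ * (w1 - w0) * (1 - w1) ^ a)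
      = a * T⁻¹ * (w1 - w0) * (1 - w1)⁻¹ := by
    have : (1 - w1) ^ (-a - 1) * (1 - w1) ^ a = (1 - w1)⁻¹ := by
      rw [← Real.rpow_add hpos, ← Real.rpow_neg_one]
      congr 1
      ring
    rw [← this]
    ring
  have h1 : |damageOp a d0 y u1 t - damageOp a d0 y u2 t| ≤
        a * T⁻¹ * (w1 - w0) * (1 - w1)⁻¹ * ∫ ξ in (0 : ℝ)..t, |u1 ξ - u2 ξ| := by
    have e : damageOp a d0 y u1 t - damageOp a d0 y u2 t =
        ∫ ξ in (0 : ℝ)..t, ((1 - u1 ξ) ^ (-a) * y ξ - (1 - u2 ξ) ^ (-a) * y ξ) := by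
      rw [intervalIntegral.integral_sub (hint u1 hc1 hb1) (hint u2 hc2 hb2)]
      unfold damageOp
      ring
    rw [e, ← intervalIntegral.integral_const_mul]
    refine (intervalIntegral.abs_integral_le_integral_abs ht.1).trans ?_
    refine intervalIntegral.integral_mono_ae_restrict ht.1
      ((hint u1 hc1 hb1).sub (hint u2 hc2 hb2)).abs (hdint.const_mul _) ?_
    filter_upwards [hyb', ae_restrict_mem measurableSet_Icc] with s hs hsm
    have hl := rpow_lip_aux a w1 ha hw1 (u1 s) (u2 s) (hb1 s (hsub hsm)) (hb2 s (hsub hsm))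
    show |(1 - u1 s) ^ (-a) * y s - (1 - u2 s) ^ (-a) * y s| ≤ _
    rw [← sub_mul, abs_mul, abs_of_nonneg hs.1, ← hconst]
    calc _ ≤ (a * (1 - w1) ^ (-a - 1) * |u1 s - u2 s|) * (T⁻¹ * (w1 - w0) * (1 - w1) ^ a) :=
          mul_le_mul hl hs.2 hs.1 ((abs_nonneg _).trans hl)
      _ = _ := by ring
  refine ⟨h1, h1.trans ?_⟩
  set S := sSup ((fun s => |u1 s - u2 s|) '' Icc (0 : ℝ) T) with hS
  have hle : ∀ s ∈ Icc (0 : ℝ) T, |u1 s - u2 s| ≤ S := fun s hs =>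
    le_csSup (isCompact_Icc.image_of_continuousOn hdc).bddAbove ⟨s, hs, rfl⟩
  have hS0 : 0 ≤ S := (abs_nonneg _).trans (hle t ht)
  have h2 : ∫ ξ in (0 : ℝ)..t, |u1 ξ - u2 ξ| ≤ T * S := by
    have h3 := intervalIntegral.integral_mono_on ht.1 hdint
      (intervalIntegrable_const (c := S)) (fun s hs => hle s (hsub hs))
    rw [intervalIntegral.integral_const, smul_eq_mul, sub_zero] at h3
    exact h3.trans (mul_le_mul_of_nonneg_right ht.2 hS0)
  have hk : 0 ≤ a * T⁻¹ * (w1 - w0) * (1 - w1)⁻¹ := by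
    have : 0 ≤ w1 - w0 := by linarith
    positivity
  refine (mul_le_mul_of_nonneg_left h2 hk).trans (le_of_eq ?_)
  field_simp
end

section
/- For every λ > 0 and all continuous functions ω₁, ω₂ : [0,T] → ℝ with values in [0, ω₁], every d₀ ∈ [0, ω₀] and every admissible source y, the operator O is a contraction for the weighted (Bielecki) norm up to the factor λ⁻¹: ‖Oω₁ − Oω₂‖_λ ≤ λ⁻¹ · α·T⁻¹(ω₁ − ω₀)(1 − ω₁)^{−1} · ‖ω₁ − ω₂‖_λ, where ‖f‖_λ := max_{t∈[0,T]} e^{−λt}|f(t)|. -/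
open MeasureTheory Set

/-- The weighted (Bielecki) norm `‖f‖_λ := max_{t∈[0,T]} e^{−λt}|f(t)|`. -/
noncomputable def bieleckiNorm (T lam : ℝ) (f : ℝ → ℝ) : ℝ :=
  sSup ((fun t => Real.exp (-lam * t) * |f t|) '' Icc (0 : ℝ) T)

theorem rpow_neg_lip (a c x z : ℝ) (ha : 1 ≤ a) (hc : 0 < c) (hx : c ≤ x) (hz : c ≤ z) :
    |x ^ (-a) - z ^ (-a)| ≤ a * c ^ (-a - 1) * |x - z| := by
  have := Convex.norm_image_sub_le_of_norm_hasDerivWithin_le (𝕜 := ℝ)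
    (f := fun x : ℝ => x ^ (-a)) (f' := fun x : ℝ => -a * x ^ (-a - 1)) (s := Ici c)
    (C := a * c ^ (-a - 1)) (x := z) (y := x)
    (fun r hr => (Real.hasDerivAt_rpow_const
      (Or.inl (lt_of_lt_of_le hc hr).ne')).hasDerivWithinAt)
    (fun r hr => by
      have hr0 : 0 < r := lt_of_lt_of_le hc hr
      rw [Real.norm_eq_abs, abs_mul, abs_neg, abs_of_pos (by linarith : 0 < a),
        abs_of_pos (Real.rpow_pos_of_pos hr0 _)]
      exact mul_le_mul_of_nonneg_left
        (Real.rpow_le_rpow_of_nonpos hc hr (by linarith)) (by linarith))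
    (convex_Ici c) hz hx
  simpa [Real.norm_eq_abs] using this

theorem damage_integrable (T a w0 w1 : ℝ) (hw1 : w1 < 1)
    (y : ℝ → ℝ) (hy : AdmissibleSource T a w0 w1 y) (u : ℝ → ℝ)
    (hc : ContinuousOn u (Icc (0 : ℝ) T)) (hb : ∀ t ∈ Icc (0 : ℝ) T, u t ∈ Icc (0 : ℝ) w1) :
    IntegrableOn (fun ξ => (1 - u ξ) ^ (-a) * y ξ) (Icc (0 : ℝ) T) := by
  have hy' : IntegrableOn y (Icc (0 : ℝ) T) := by
    refine Measure.integrableOn_of_bounded (M := T⁻¹ * (w1 - w0) * (1 - w1) ^ a)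
      (by simp) hy.1.aestronglyMeasurable ?_
    filter_upwards [hy.2] with t ht
    rw [Real.norm_eq_abs, abs_of_nonneg ht.1]
    exact ht.2
  refine IntegrableOn.continuousOn_mul ?_ hy' isCompact_Icc
  refine (continuousOn_const.sub hc).rpow_const ?_
  intro x hx
  left
  have := (hb x hx).2
  intro h
  replace h : 1 - u x = 0 := h
  linarith

/-- The operator `O` is a contraction up to the factor `λ⁻¹` with respect to the
Bielecki norm. -/
theorem damageOp_bielecki_contraction
    (T a w0 w1 : ℝ) (hT : 0 < T) (ha : 1 ≤ a)
    (hw0 : 0 ≤ w0) (hw01 : w0 ≤ w1) (hw1 : w1 < 1)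
    (lam : ℝ) (hlam : 0 < lam)
    (d0 : ℝ) (hd0 : d0 ∈ Icc (0 : ℝ) w0)
    (y : ℝ → ℝ) (hy : AdmissibleSource T a w0 w1 y)
    (u1 u2 : ℝ → ℝ)
    (hc1 : ContinuousOn u1 (Icc (0 : ℝ) T)) (hc2 : ContinuousOn u2 (Icc (0 : ℝ) T))
    (hb1 : ∀ t ∈ Icc (0 : ℝ) T, u1 t ∈ Icc (0 : ℝ) w1)
    (hb2 : ∀ t ∈ Icc (0 : ℝ) T, u2 t ∈ Icc (0 : ℝ) w1) :
    bieleckiNorm T lam (fun t => damageOp a d0 y u1 t - damageOp a d0 y u2 t) ≤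
      lam⁻¹ * (a * T⁻¹ * (w1 - w0) * (1 - w1)⁻¹) *
        bieleckiNorm T lam (fun t => u1 t - u2 t) := by
  obtain ⟨hym, hyb⟩ := id hy
  set N := bieleckiNorm T lam (fun t => u1 t - u2 t) with hN
  set K := a * T⁻¹ * (w1 - w0) * (1 - w1)⁻¹ with hK
  have hc0 : 0 < 1 - w1 := by linarith
  have hKnn : 0 ≤ K := by
    have : 0 ≤ w1 - w0 := by linarith
    positivity
  have hNb : ∀ t ∈ Icc (0 : ℝ) T, Real.exp (-lam * t) * |u1 t - u2 t| ≤ N := by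
    intro t ht
    refine le_csSup (IsCompact.bddAbove (isCompact_Icc.image_of_continuousOn ?_))
      (mem_image_of_mem _ ht)
    exact (by fun_prop : Continuous fun t : ℝ => Real.exp (-lam * t)).continuousOn.mul
      (hc1.sub hc2).abs
  have hNnn : 0 ≤ N := le_trans (by positivity) (hNb 0 ⟨le_rfl, hT.le⟩)
  have hNb' : ∀ t ∈ Icc (0 : ℝ) T, |u1 t - u2 t| ≤ N * Real.exp (lam * t) := by
    intro t ht
    have h := mul_le_mul_of_nonneg_right (hNb t ht) (Real.exp_pos (lam * t)).le
    have e : Real.exp (-lam * t) * Real.exp (lam * t) = 1 := by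
      rw [← Real.exp_add]; simp
    calc |u1 t - u2 t| = (Real.exp (-lam * t) * Real.exp (lam * t)) * |u1 t - u2 t| := by
          rw [e, one_mul]
      _ = Real.exp (-lam * t) * |u1 t - u2 t| * Real.exp (lam * t) := by ring
      _ ≤ _ := h
  refine csSup_le ((nonempty_Icc.2 hT.le).image _) ?_
  rintro _ ⟨t, ht, rfl⟩
  have hsub : Icc (0 : ℝ) t ⊆ Icc 0 T := Icc_subset_Icc_right ht.2
  have hi : ∀ u : ℝ → ℝ, ContinuousOn u (Icc (0 : ℝ) T) →
      (∀ t ∈ Icc (0 : ℝ) T, u t ∈ Icc (0 : ℝ) w1) →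
      IntervalIntegrable (fun ξ => (1 - u ξ) ^ (-a) * y ξ) volume 0 t := by
    intro u hc hb
    rw [intervalIntegrable_iff_integrableOn_Icc_of_le ht.1]
    exact (damage_integrable T a w0 w1 hw1 y hy u hc hb).mono_set hsub
  have key : |damageOp a d0 y u1 t - damageOp a d0 y u2 t| ≤
      ∫ ξ in (0 : ℝ)..t, K * N * Real.exp (lam * ξ) := by
    unfold damageOp
    rw [add_sub_add_left_eq_sub, ← intervalIntegral.integral_sub (hi u1 hc1 hb1) (hi u2 hc2 hb2),
      ← Real.norm_eq_abs]
    refine intervalIntegral.norm_integral_le_of_norm_le ht.1 ?_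
      (Continuous.intervalIntegrable (by fun_prop) _ _)
    rw [ae_restrict_iff' measurableSet_Icc] at hyb
    filter_upwards [hyb] with s hs hst
    have hsT : s ∈ Icc (0 : ℝ) T := hsub (Ioc_subset_Icc_self hst)
    obtain ⟨h0, h1⟩ := hs hsT
    have hl := rpow_neg_lip a (1 - w1) (1 - u1 s) (1 - u2 s) ha hc0
      (by linarith [(hb1 s hsT).2]) (by linarith [(hb2 s hsT).2])
    have e1 : |1 - u1 s - (1 - u2 s)| = |u1 s - u2 s| := by
      rw [abs_sub_comm (u1 s)]; congr 1; ring
    rw [e1] at hl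
    have e2 : (1 - w1) ^ (-a - 1) * (1 - w1) ^ a = (1 - w1)⁻¹ := by
      rw [← Real.rpow_add hc0, ← Real.rpow_neg_one]; congr 1; ring
    rw [← sub_mul, norm_mul, Real.norm_eq_abs, Real.norm_eq_abs, abs_of_nonneg h0]
    have hp := Real.rpow_pos_of_pos hc0 (-a - 1)
    have ha0 : 0 ≤ a := by linarith
    calc _ ≤ (a * (1 - w1) ^ (-a - 1) * |u1 s - u2 s|) *
            (T⁻¹ * (w1 - w0) * (1 - w1) ^ a) :=
          mul_le_mul hl h1 h0 (by positivity)
      _ = a * T⁻¹ * (w1 - w0) * ((1 - w1) ^ (-a - 1) * (1 - w1) ^ a) * |u1 s - u2 s| := by ring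
      _ = K * |u1 s - u2 s| := by rw [e2]
      _ ≤ K * (N * Real.exp (lam * s)) := mul_le_mul_of_nonneg_left (hNb' s hsT) hKnn
      _ = _ := by ring
  have hint : ∫ ξ in (0 : ℝ)..t, K * N * Real.exp (lam * ξ) =
      K * N * (lam⁻¹ * (Real.exp (lam * t) - 1)) := by
    rw [intervalIntegral.integral_const_mul,
      intervalIntegral.integral_comp_mul_left (fun x => Real.exp x) hlam.ne', integral_exp]
    simp
  rw [hint] at key
  have e : Real.exp (-lam * t) * Real.exp (lam * t) = 1 := by
    rw [← Real.exp_add]; simp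
  have hE := Real.exp_pos (-lam * t)
  calc Real.exp (-lam * t) * |damageOp a d0 y u1 t - damageOp a d0 y u2 t|
      ≤ Real.exp (-lam * t) * (K * N * (lam⁻¹ * (Real.exp (lam * t) - 1))) :=
        mul_le_mul_of_nonneg_left key hE.le
    _ = lam⁻¹ * K * N * (Real.exp (-lam * t) * Real.exp (lam * t))
        - lam⁻¹ * K * N * Real.exp (-lam * t) := by ring
    _ ≤ lam⁻¹ * K * N := by
        rw [e, mul_one]
        have : 0 ≤ lam⁻¹ * K * N * Real.exp (-lam * t) := by positivity
        linarith
end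

section
/- There exists a constant c > 0, depending only on T, α, ω₀ and ω₁, such that whenever ω₁ solves the damage integral equation with data (d₁₀, y₁) and ω₂ solves it with data (d₂₀, y₂) (initial values d₁₀, d₂₀ ∈ [0, ω₀] and admissible sources y₁, y₂), then max_{t∈[0,T]} |ω₁(t) − ω₂(t)| ≤ c·( |d₁₀ − d₂₀| + ess sup_{t∈[0,T]} |y₁(t) − y₂(t)| ). -/
open MeasureTheory Set

lemma gron_aux (T A B : ℝ) (hT : 0 < T) (hB : 0 < B) (v : ℝ → ℝ)
    (hv : ContinuousOn v (Icc 0 T))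
    (h : ∀ t ∈ Icc (0:ℝ) T, v t ≤ A + B * ∫ s in (0:ℝ)..t, v s) (hA : 0 ≤ A) :
    ∀ t ∈ Icc (0:ℝ) T, v t ≤ 2 * A * Real.exp (2 * B * T) := by
  have hc : ContinuousOn (fun t => v t * Real.exp (-(2 * B * t))) (Icc 0 T) :=
    hv.mul (by fun_prop)
  obtain ⟨m, hm, hmax⟩ := isCompact_Icc.exists_isMaxOn (nonempty_Icc.2 hT.le) hc
  set N := v m * Real.exp (-(2 * B * m)) with hN
  have hb : ∀ t ∈ Icc (0:ℝ) T, v t ≤ N * Real.exp (2 * B * t) := by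
    intro t ht
    have h1 : v t * Real.exp (-(2 * B * t)) ≤ N := hmax ht
    rw [Real.exp_neg, ← div_eq_mul_inv, div_le_iff₀ (Real.exp_pos _)] at h1
    exact h1
  have hint : ∫ s in (0:ℝ)..m, v s ≤ ∫ s in (0:ℝ)..m, N * Real.exp (2 * B * s) := by
    apply intervalIntegral.integral_mono_on hm.1
    · apply ContinuousOn.intervalIntegrable
      rw [uIcc_of_le hm.1]
      exact hv.mono (Icc_subset_Icc_right hm.2)
    · exact Continuous.intervalIntegrable (by fun_prop) _ _
    · intro x hx
      exact hb x ⟨hx.1, hx.2.trans hm.2⟩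
  have hcomp : ∫ s in (0:ℝ)..m, N * Real.exp (2 * B * s)
      = N * ((Real.exp (2 * B * m) - 1) / (2 * B)) := by
    rw [intervalIntegral.integral_const_mul, intervalIntegral.integral_comp_mul_left (f := Real.exp) (by positivity)]
    simp [integral_exp]
    left
    field_simp
  have hm1 := h m hm
  rw [hcomp] at hint
  have hvm : v m = N * Real.exp (2 * B * m) := by
    rw [hN, mul_assoc, ← Real.exp_add]; simp
  have he : 1 ≤ Real.exp (2 * B * m) := Real.one_le_exp (by have := hm.1; positivity)
  have h2 : v m ≤ A + N * (Real.exp (2 * B * m) - 1) / 2 := by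
    calc v m ≤ _ := hm1
      _ ≤ A + B * (N * ((Real.exp (2 * B * m) - 1) / (2 * B))) := by gcongr
      _ = _ := by field_simp
  rw [hvm] at h2
  have hN2 : N ≤ 2 * A := by
    by_contra! hcon
    nlinarith
  intro t ht
  calc v t ≤ _ := hb t ht
    _ ≤ 2 * A * Real.exp (2 * B * t) := by gcongr
    _ ≤ _ := by
      have := ht.2
      gcongr

lemma lip_aux (a w1 : ℝ) (ha : 1 ≤ a) (hw1 : w1 < 1) (x y : ℝ) (hx : x ∈ Icc 0 w1)
    (hy : y ∈ Icc 0 w1) :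
    |(1 - x) ^ (-a) - (1 - y) ^ (-a)| ≤ a * (1 - w1) ^ (-a - 1) * |x - y| := by
  have := Convex.norm_image_sub_le_of_norm_hasDerivWithin_le (s := Icc (0:ℝ) w1)
    (f := fun x : ℝ => (1 - x) ^ (-a)) (f' := fun x => a * (1 - x) ^ (-a - 1))
    (C := a * (1 - w1) ^ (-a - 1)) (x := y) (y := x) ?_ ?_ (convex_Icc _ _) hy hx
  · simpa [Real.norm_eq_abs] using this
  · intro z hz
    have hz1 : 0 < 1 - z := by linarith [hz.2]
    have h1 : HasDerivAt (fun x : ℝ => 1 - x) (-1) z := by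
      simpa using (hasDerivAt_id z).const_sub 1
    have := h1.rpow_const (p := -a) (Or.inl hz1.ne')
    convert this.hasDerivWithinAt using 1
    ring
  · intro z hz
    have hz1 : 0 < 1 - z := by linarith [hz.2]
    rw [Real.norm_eq_abs, abs_of_nonneg (by positivity)]
    apply mul_le_mul_of_nonneg_left _ (by linarith)
    exact Real.rpow_le_rpow_of_nonpos (by linarith) (by linarith [hz.2]) (by linarith)

/-- Lipschitz continuous dependence of the solution of the damage integral
equation on the initial value and the source. -/
theorem damage_solution_continuous_dependence
    (T a w0 w1 : ℝ) (hT : 0 < T) (ha : 1 ≤ a)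
    (hw0 : 0 ≤ w0) (hw01 : w0 ≤ w1) (hw1 : w1 < 1) :
    ∃ c > (0 : ℝ), ∀ d10 ∈ Icc (0 : ℝ) w0, ∀ d20 ∈ Icc (0 : ℝ) w0,
      ∀ y1 y2 : ℝ → ℝ, AdmissibleSource T a w0 w1 y1 → AdmissibleSource T a w0 w1 y2 →
      ∀ u1 u2 : ℝ → ℝ, SolvesDamage T a w1 d10 y1 u1 → SolvesDamage T a w1 d20 y2 u2 →
      sSup ((fun t => |u1 t - u2 t|) '' Icc (0 : ℝ) T) ≤
        c * (|d10 - d20| +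
          essSup (fun t => |y1 t - y2 t|) (volume.restrict (Icc (0 : ℝ) T))) := by
  have hw1' : 0 < 1 - w1 := by linarith
  set M := T⁻¹ * (w1 - w0) * (1 - w1) ^ a with hM
  have hM0 : 0 ≤ M := by
    have : 0 ≤ w1 - w0 := by linarith
    positivity
  set K := (1 - w1) ^ (-a) with hK
  have hK0 : 0 < K := by positivity
  set L := a * (1 - w1) ^ (-a - 1) with hL
  have hL0 : 0 < L := by positivity
  have hB0 : 0 < L * M + 1 := by positivity
  refine ⟨2 * (1 + T * K) * Real.exp (2 * (L * M + 1) * T), by positivity, ?_⟩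
  intro d10 hd1 d20 hd2 y1 y2 hy1 hy2 u1 u2 hu1 hu2
  set μ := volume.restrict (Icc (0 : ℝ) T) with hμ
  set E := essSup (fun t => |y1 t - y2 t|) μ with hE
  obtain ⟨hy1m, hy1b⟩ := hy1
  obtain ⟨hy2m, hy2b⟩ := hy2
  obtain ⟨hc1, hr1, he1⟩ := hu1
  obtain ⟨hc2, hr2, he2⟩ := hu2
  rw [← hμ, ← hM] at hy1b hy2b
  have hEb : ∀ᵐ t ∂μ, |y1 t - y2 t| ≤ E := by
    apply ae_le_essSup
    refine ⟨M, ?_⟩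
    rw [Filter.eventually_map]
    filter_upwards [hy1b, hy2b] with t h1 h2
    rw [abs_le]
    constructor <;> linarith
  have hE0 : 0 ≤ E := by
    have : (ae μ).NeBot := by
      rw [ae_neBot, hμ, Ne, Measure.restrict_eq_zero, Real.volume_Icc]
      simpa using hT
    obtain ⟨t, ht⟩ := hEb.exists
    exact (abs_nonneg _).trans ht
  have hkc : ∀ u : ℝ → ℝ, ContinuousOn u (Icc 0 T) → (∀ t ∈ Icc (0:ℝ) T, u t ∈ Icc 0 w1) →
      ContinuousOn (fun t => (1 - u t) ^ (-a)) (Icc 0 T) := by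
    intro u hc hr
    apply ContinuousOn.rpow_const (by fun_prop)
    intro t ht
    left
    linarith [(hr t ht).2]
  have hii : ∀ u y : ℝ → ℝ, ContinuousOn u (Icc 0 T) → (∀ t ∈ Icc (0:ℝ) T, u t ∈ Icc 0 w1) →
      Measurable y → (∀ᵐ t ∂μ, 0 ≤ y t ∧ y t ≤ M) → ∀ t ∈ Icc (0:ℝ) T,
      IntervalIntegrable (fun t => (1 - u t) ^ (-a) * y t) volume 0 t := by
    intro u y hc hr hym hyb t ht
    have h1 : IntegrableOn y (Icc 0 T) := by
      apply Measure.integrableOn_of_bounded (M := M) (by simp) hym.aestronglyMeasurable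
      filter_upwards [hyb] with s hs
      rw [Real.norm_eq_abs, abs_of_nonneg hs.1]
      exact hs.2
    have h2 := h1.continuousOn_mul (hkc u hc hr) isCompact_Icc
    rw [intervalIntegrable_iff_integrableOn_Icc_of_le ht.1]
    exact h2.mono_set (Icc_subset_Icc_right ht.2)
  have hvc : ContinuousOn (fun t => |u1 t - u2 t|) (Icc 0 T) := (hc1.sub hc2).abs
  have key := gron_aux T (|d10 - d20| + T * K * E) (L * M + 1) hT hB0 _ hvc ?_ (by positivity)
  · apply csSup_le ((nonempty_Icc.2 hT.le).image _)
    rintro _ ⟨t, ht, rfl⟩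
    refine (key t ht).trans ?_
    have : |d10 - d20| + T * K * E ≤ (1 + T * K) * (|d10 - d20| + E) := by
      have h1 : 0 ≤ T * K * |d10 - d20| := by positivity
      nlinarith
    calc _ ≤ 2 * ((1 + T * K) * (|d10 - d20| + E)) * Real.exp (2 * (L * M + 1) * T) := by gcongr
      _ = _ := by ring
  · intro t ht
    have hvi : IntervalIntegrable (fun t => |u1 t - u2 t|) volume 0 t := by
      apply ContinuousOn.intervalIntegrable
      rw [uIcc_of_le ht.1]
      exact hvc.mono (Icc_subset_Icc_right ht.2)
    have hsub : u1 t - u2 t = (d10 - d20) + ∫ ξ in (0:ℝ)..t,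
        ((1 - u1 ξ) ^ (-a) * y1 ξ - (1 - u2 ξ) ^ (-a) * y2 ξ) := by
      rw [intervalIntegral.integral_sub (hii u1 y1 hc1 hr1 hy1m hy1b t ht)
        (hii u2 y2 hc2 hr2 hy2m hy2b t ht), he1 t ht, he2 t ht]
      ring
    have hbd : ‖∫ ξ in (0:ℝ)..t,
        ((1 - u1 ξ) ^ (-a) * y1 ξ - (1 - u2 ξ) ^ (-a) * y2 ξ)‖ ≤
        ∫ ξ in (0:ℝ)..t, ((L * M + 1) * |u1 ξ - u2 ξ| + K * E) := by
      apply intervalIntegral.norm_integral_le_of_norm_le ht.1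
      · have hall : ∀ᵐ s ∂μ, s ∈ Icc 0 T ∧ (0 ≤ y1 s ∧ y1 s ≤ M) ∧ |y1 s - y2 s| ≤ E := by
          filter_upwards [hy1b, hEb, ae_restrict_mem measurableSet_Icc] with s h1 h2 h3
          exact ⟨h3, h1, h2⟩
        rw [hμ, ae_restrict_iff' measurableSet_Icc] at hall
        filter_upwards [hall] with s hs hst
        obtain ⟨hsm, ⟨h0, h1⟩, h2⟩ := hs ⟨hst.1.le, hst.2.trans ht.2⟩
        have hl := lip_aux a w1 ha hw1 _ _ (hr1 s hsm) (hr2 s hsm)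
        rw [← hL] at hl
        have hp : 0 < 1 - u2 s := by linarith [(hr2 s hsm).2]
        have hk : (1 - u2 s) ^ (-a) ≤ K :=
          Real.rpow_le_rpow_of_nonpos hw1' (by linarith [(hr2 s hsm).2]) (by linarith)
        calc ‖(1 - u1 s) ^ (-a) * y1 s - (1 - u2 s) ^ (-a) * y2 s‖
            = |((1 - u1 s) ^ (-a) - (1 - u2 s) ^ (-a)) * y1 s
              + (1 - u2 s) ^ (-a) * (y1 s - y2 s)| := by
              rw [Real.norm_eq_abs]; congr 1; ring
          _ ≤ |(1 - u1 s) ^ (-a) - (1 - u2 s) ^ (-a)| * y1 s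
              + (1 - u2 s) ^ (-a) * |y1 s - y2 s| := by
              refine (abs_add_le _ _).trans ?_
              rw [abs_mul, abs_mul, abs_of_nonneg h0,
                abs_of_nonneg (Real.rpow_nonneg hp.le (-a))]
          _ ≤ (L * |u1 s - u2 s|) * M + K * E := by gcongr
          _ ≤ _ := by nlinarith [abs_nonneg (u1 s - u2 s)]
      · exact (hvi.const_mul _).add intervalIntegrable_const
    rw [intervalIntegral.integral_add (hvi.const_mul _) intervalIntegrable_const,
      intervalIntegral.integral_const_mul, intervalIntegral.integral_const, smul_eq_mul,
      Real.norm_eq_abs] at hbd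
    have h3 : (t - 0) * (K * E) ≤ T * K * E := by
      rw [sub_zero, mul_assoc]
      have := ht.2
      gcongr
    have h4 := abs_add_le (d10 - d20) (∫ ξ in (0:ℝ)..t,
        ((1 - u1 ξ) ^ (-a) * y1 ξ - (1 - u2 ξ) ^ (-a) * y2 ξ))
    rw [← hsub] at h4
    show |u1 t - u2 t| ≤ _
    linarith
end

section
/- If the admissible source y is continuous on [0,T], then the solution ω of the damage integral equation with initial value d₀ ∈ [0, ω₀] is continuously differentiable on [0,T] with ω'(t) = (1 − ω(t))^{−α} y(t) for all t ∈ [0,T], and moreover 0 ≤ ω'(t) ≤ T⁻¹(ω₁ − ω₀) for all t ∈ [0,T]. -/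
open MeasureTheory Set

/-- If the admissible source `y` is continuous, the solution of the damage
integral equation is continuously differentiable with
`ω'(t) = (1 − ω(t))^(−α) y(t)`, and `0 ≤ ω'(t) ≤ T⁻¹(ω₁ − ω₀)`. -/
theorem damage_solution_continuously_differentiable
    (T a w0 w1 : ℝ) (hT : 0 < T) (ha : 1 ≤ a)
    (hw0 : 0 ≤ w0) (hw01 : w0 ≤ w1) (hw1 : w1 < 1)
    (d0 : ℝ) (hd0 : d0 ∈ Icc (0 : ℝ) w0)
    (y : ℝ → ℝ) (hy : AdmissibleSource T a w0 w1 y)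
    (hyc : ContinuousOn y (Icc (0 : ℝ) T))
    (ω : ℝ → ℝ) (hω : SolvesDamage T a w1 d0 y ω) :
    (∀ t ∈ Icc (0 : ℝ) T,
        HasDerivWithinAt ω ((1 - ω t) ^ (-a) * y t) (Icc (0 : ℝ) T) t) ∧
    ContinuousOn (fun t => (1 - ω t) ^ (-a) * y t) (Icc (0 : ℝ) T) ∧
    ∀ t ∈ Icc (0 : ℝ) T,
      0 ≤ (1 - ω t) ^ (-a) * y t ∧ (1 - ω t) ^ (-a) * y t ≤ T⁻¹ * (w1 - w0) := by
  obtain ⟨hωc, hωb, hωe⟩ := hω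
  obtain ⟨-, hyb⟩ := hy
  have hpos : ∀ t ∈ Icc (0 : ℝ) T, 0 < 1 - ω t := fun t ht => by
    have := (hωb t ht).2
    linarith
  have hc : ContinuousOn (fun t => (1 - ω t) ^ (-a) * y t) (Icc (0 : ℝ) T) :=
    ((continuousOn_const.sub hωc).rpow_const
      (fun t ht => Or.inl (hpos t ht).ne')).mul hyc
  refine ⟨?_, hc, ?_⟩
  · intro t ht
    have hg : Continuous (IccExtend hT.le
        ((Icc (0 : ℝ) T).domRestrict (fun t => (1 - ω t) ^ (-a) * y t))) :=
      hc.domRestrict.Icc_extend'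
    have hge : ∀ s ∈ Icc (0 : ℝ) T, IccExtend hT.le
        ((Icc (0 : ℝ) T).domRestrict (fun t => (1 - ω t) ^ (-a) * y t)) s
          = (1 - ω s) ^ (-a) * y s := fun s hs => by
      rw [IccExtend_of_mem _ _ hs]; rfl
    have hd := ((hg.integral_hasStrictDerivAt 0 t).hasDerivAt.const_add d0).hasDerivWithinAt
      (s := Icc (0 : ℝ) T)
    rw [hge t ht] at hd
    have key : ∀ s ∈ Icc (0 : ℝ) T, ω s = d0 + ∫ ξ in (0 : ℝ)..s, IccExtend hT.le
        ((Icc (0 : ℝ) T).domRestrict (fun t => (1 - ω t) ^ (-a) * y t)) ξ := fun s hs => by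
      rw [hωe s hs]
      congr 1
      apply intervalIntegral.integral_congr
      intro ξ hξ
      rw [uIcc_of_le hs.1] at hξ
      exact (hge ξ ⟨hξ.1, hξ.2.trans hs.2⟩).symm
    exact hd.congr key (key t ht)
  · have h1 : EqOn y (fun t => max (y t) 0) (Icc 0 T) :=
      Measure.eqOn_Icc_of_ae_eq volume hT.ne
        (by filter_upwards [hyb] with t ht using (max_eq_left ht.1).symm) hyc
        (hyc.sup continuousOn_const)
    have h2 : EqOn y (fun t => min (y t) (T⁻¹ * (w1 - w0) * (1 - w1) ^ a)) (Icc 0 T) :=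
      Measure.eqOn_Icc_of_ae_eq volume hT.ne
        (by filter_upwards [hyb] with t ht using (min_eq_left ht.2).symm) hyc
        (hyc.inf continuousOn_const)
    intro t ht
    have hy0 : 0 ≤ y t := by rw [h1 ht]; exact le_max_right _ _
    have hyM : y t ≤ T⁻¹ * (w1 - w0) * (1 - w1) ^ a := by rw [h2 ht]; exact min_le_right _ _
    have hp := hpos t ht
    refine ⟨mul_nonneg (Real.rpow_nonneg hp.le _) hy0, ?_⟩
    have hpa := Real.rpow_pos_of_pos hp a
    rw [Real.rpow_neg hp.le, inv_mul_le_iff₀ hpa, mul_comm]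
    refine hyM.trans (mul_le_mul_of_nonneg_left ?_ ?_)
    · exact Real.rpow_le_rpow (by linarith) (by linarith [(hωb t ht).2]) (by linarith)
    · exact mul_nonneg (inv_nonneg.2 hT.le) (by linarith)
end

section
/- There exists a constant c > 0, depending only on T, α, ω₀ and ω₁, with the following property: if y₁ and y₂ are continuous admissible sources, d₁₀, d₂₀ ∈ [0, ω₀], and ω₁, ω₂ are the corresponding solutions of the damage integral equation, then the derivatives satisfy |ω₁'(t) − ω₂'(t)| ≤ c·( |ω₁(t) − ω₂(t)| + max_{s∈[0,T]} |y₁(s) − y₂(s)| ) for every t ∈ [0,T]. -/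
open MeasureTheory Set

theorem damage_source_bound {T a w0 w1 : ℝ} {y : ℝ → ℝ} (hT : 0 < T)
    (hM : 0 ≤ T⁻¹ * (w1 - w0) * (1 - w1) ^ a)
    (h : AdmissibleSource T a w0 w1 y) (hc : ContinuousOn y (Icc (0 : ℝ) T)) :
    ∀ t ∈ Icc (0 : ℝ) T, 0 ≤ y t ∧ y t ≤ T⁻¹ * (w1 - w0) * (1 - w1) ^ a := by
  have hE : EqOn y (fun t => max 0 (min (y t) (T⁻¹ * (w1 - w0) * (1 - w1) ^ a)))
      (Icc (0 : ℝ) T) := by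
    refine Measure.eqOn_Icc_of_ae_eq volume hT.ne ?_ hc
      (continuousOn_const.sup (hc.inf continuousOn_const))
    filter_upwards [h.2] with t ht
    rw [min_eq_left ht.2, max_eq_right ht.1]
  intro t ht
  rw [hE ht]
  exact ⟨le_max_left _ _, max_le hM (min_le_right _ _)⟩

theorem damage_rpow_lip {a p x z : ℝ} (ha : 0 ≤ a) (hp : 0 < p) (hx : p ≤ x) (hz : p ≤ z) :
    |x ^ (-a) - z ^ (-a)| ≤ a * p ^ (-a - 1) * |x - z| := by
  have := (convex_Ici p).norm_image_sub_le_of_norm_hasDerivWithin_le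
    (f := fun s : ℝ => s ^ (-a)) (f' := fun s : ℝ => -a * s ^ (-a - 1))
    (C := a * p ^ (-a - 1)) (x := z) (y := x) ?_ ?_ hz hx
  · simpa [Real.norm_eq_abs] using this
  · intro s hs
    exact (Real.hasDerivAt_rpow_const (Or.inl (hp.trans_le hs).ne')).hasDerivWithinAt
  · intro s hs
    have hs' : 0 ≤ s ^ (-a - 1) := Real.rpow_nonneg (hp.trans_le hs).le _
    rw [norm_mul, Real.norm_eq_abs, Real.norm_eq_abs, abs_neg, abs_of_nonneg ha,
      abs_of_nonneg hs']
    exact mul_le_mul_of_nonneg_left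
      (Real.rpow_le_rpow_of_nonpos hp hs (by linarith)) ha

/-- Lipschitz-type estimate for the derivatives of two solutions of the damage
integral equation with continuous sources: `ω'(t) = (1 − ω(t))^(−α) y(t)` and
`|ω₁'(t) − ω₂'(t)| ≤ c(|ω₁(t) − ω₂(t)| + max_s |y₁(s) − y₂(s)|)`. -/
theorem damage_solution_derivative_estimate
    (T a w0 w1 : ℝ) (hT : 0 < T) (ha : 1 ≤ a)
    (hw0 : 0 ≤ w0) (hw01 : w0 ≤ w1) (hw1 : w1 < 1) :
    ∃ c > (0 : ℝ),
      ∀ y1 y2 : ℝ → ℝ, AdmissibleSource T a w0 w1 y1 → AdmissibleSource T a w0 w1 y2 →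
      ContinuousOn y1 (Icc (0 : ℝ) T) → ContinuousOn y2 (Icc (0 : ℝ) T) →
      ∀ d10 ∈ Icc (0 : ℝ) w0, ∀ d20 ∈ Icc (0 : ℝ) w0,
      ∀ u1 u2 : ℝ → ℝ, SolvesDamage T a w1 d10 y1 u1 → SolvesDamage T a w1 d20 y2 u2 →
      ∀ t ∈ Icc (0 : ℝ) T,
        |(1 - u1 t) ^ (-a) * y1 t - (1 - u2 t) ^ (-a) * y2 t| ≤
          c * (|u1 t - u2 t| + sSup ((fun s => |y1 s - y2 s|) '' Icc (0 : ℝ) T)) := by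
  have hp : 0 < 1 - w1 := by linarith
  have hMnn : 0 ≤ T⁻¹ * (w1 - w0) * (1 - w1) ^ a :=
    mul_nonneg (mul_nonneg (inv_nonneg.2 hT.le) (by linarith)) (Real.rpow_nonneg hp.le _)
  set M := T⁻¹ * (w1 - w0) * (1 - w1) ^ a with hM
  set B := (1 - w1) ^ (-a) with hB
  have hBnn : 0 ≤ B := Real.rpow_nonneg hp.le _
  set K := a * (1 - w1) ^ (-a - 1) with hK
  have hKnn : 0 ≤ K := mul_nonneg (by linarith) (Real.rpow_nonneg hp.le _)
  refine ⟨K * M + B + 1, by positivity, ?_⟩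
  intro y1 y2 h1 h2 hc1 hc2 d10 _ d20 _ u1 u2 hu1 hu2 t ht
  have hy2 : 0 ≤ y2 t ∧ y2 t ≤ M := damage_source_bound hT hMnn h2 hc2 t ht
  have hb1 := hu1.2.1 t ht
  have hb2 := hu2.2.1 t ht
  have hS : |y1 t - y2 t| ≤ sSup ((fun s => |y1 s - y2 s|) '' Icc (0 : ℝ) T) :=
    le_csSup (isCompact_Icc.bddAbove_image (hc1.sub hc2).abs) ⟨t, ht, rfl⟩
  set S := sSup ((fun s => |y1 s - y2 s|) '' Icc (0 : ℝ) T)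
  have hL := damage_rpow_lip (by linarith : 0 ≤ a) hp
    (x := 1 - u1 t) (z := 1 - u2 t) (by linarith [hb1.2]) (by linarith [hb2.2])
  have e0 : |(1 - u1 t) - (1 - u2 t)| = |u1 t - u2 t| := by
    rw [abs_sub_comm]; congr 1; ring
  rw [e0] at hL
  have hP0 : 0 ≤ (1 - u1 t) ^ (-a) := Real.rpow_nonneg (by linarith [hb1.2]) _
  have hP : (1 - u1 t) ^ (-a) ≤ B :=
    Real.rpow_le_rpow_of_nonpos hp (by linarith [hb1.2]) (by linarith)
  have hD := abs_nonneg (u1 t - u2 t)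
  have hY := abs_nonneg (y1 t - y2 t)
  calc _ = |(1 - u1 t) ^ (-a) * (y1 t - y2 t)
            + ((1 - u1 t) ^ (-a) - (1 - u2 t) ^ (-a)) * y2 t| := by congr 1; ring
    _ ≤ (1 - u1 t) ^ (-a) * |y1 t - y2 t|
            + |(1 - u1 t) ^ (-a) - (1 - u2 t) ^ (-a)| * y2 t := by
        refine (abs_add_le _ _).trans (le_of_eq ?_)
        rw [abs_mul, abs_mul, abs_of_nonneg hP0, abs_of_nonneg hy2.1]
    _ ≤ B * S + (K * |u1 t - u2 t|) * M := by
        refine add_le_add (mul_le_mul hP hS hY hBnn) (mul_le_mul hL hy2.2 hy2.1 ?_)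
        positivity
    _ ≤ _ := by
        have hS0 := hY.trans hS
        have hKM := mul_nonneg hKnn hMnn
        nlinarith [mul_nonneg hKM hS0, mul_nonneg hBnn hD]
end

section
/- Fix f ∈ W and let d ∈ D and h ∈ E be such that d + h ∈ D. Set u(d) := A(d)⁻¹ f, u(d+h) := A(d+h)⁻¹ f and w_h := A(d)⁻¹( B(h)(u(d)) ). Then the identity u(d+h) − u(d) = A(d+h)⁻¹( B(h)(u(d)) ) holds, and the first-order Taylor remainder satisfies the quadratic estimate ‖u(d+h) − u(d) − w_h‖_V ≤ M³ · ‖B‖² · ‖h‖_E² · ‖f‖_W. In particular, on the interior of D the map d ↦ A(d)⁻¹ f is Fréchet differentiable with derivative h ↦ A(d)⁻¹( B(h)( A(d)⁻¹ f ) ). -/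
/-- Fréchet differentiability of the solution of the parametrized operator
equation `A(d) u = f`, where `A(d) = A₀ − B(d)`:
identity for the increment, quadratic Taylor remainder estimate, and
differentiability on the interior of `D` with derivative
`h ↦ A(d)⁻¹ (B(h) (A(d)⁻¹ f))`. -/
theorem solution_map_frechet_differentiable
    {V W E : Type*}
    [NormedAddCommGroup V] [NormedSpace ℝ V] [CompleteSpace V]
    [NormedAddCommGroup W] [NormedSpace ℝ W] [CompleteSpace W]
    [NormedAddCommGroup E] [NormedSpace ℝ E]
    (A0 : V →L[ℝ] W) (B : E →L[ℝ] V →L[ℝ] W)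
    (D : Set E) (M : ℝ) (hM : 0 < M)
    (Ainv : E → (W →L[ℝ] V))
    (hinv : ∀ d ∈ D,
      (∀ v : V, Ainv d ((A0 - B d) v) = v) ∧
      (∀ w : W, (A0 - B d) (Ainv d w) = w) ∧ ‖Ainv d‖ ≤ M)
    (f : W) (d h : E) (hd : d ∈ D) (hdh : d + h ∈ D) :
    Ainv (d + h) f - Ainv d f = Ainv (d + h) (B h (Ainv d f)) ∧
    ‖Ainv (d + h) f - Ainv d f - Ainv d (B h (Ainv d f))‖ ≤
      M ^ 3 * ‖B‖ ^ 2 * ‖h‖ ^ 2 * ‖f‖ ∧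
    ∀ d' ∈ interior D,
      HasFDerivAt (fun e : E => Ainv e f)
        ((Ainv d').comp (B.flip (Ainv d' f))) d' := by
  have key : ∀ d h : E, d ∈ D → d + h ∈ D → ∀ g : W,
      Ainv (d + h) g - Ainv d g = Ainv (d + h) (B h (Ainv d g)) := by
    intro d h hd hdh g
    have h1 := (hinv (d + h) hdh).1 (Ainv d g)
    have h2 := (hinv d hd).2.1 g
    have h3 : (A0 - B (d + h)) (Ainv d g) = g - B h (Ainv d g) := by
      rw [map_add, ← sub_sub, sub_apply, h2]
    rw [h3, map_sub] at h1
    exact sub_eq_of_eq_add (sub_eq_iff_eq_add'.1 h1)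
  have est : ∀ d h : E, d ∈ D → d + h ∈ D →
      ‖Ainv (d + h) f - Ainv d f - Ainv d (B h (Ainv d f))‖ ≤
        M ^ 3 * ‖B‖ ^ 2 * ‖h‖ ^ 2 * ‖f‖ := by
    intro d h hd hdh
    rw [key d h hd hdh f, key d h hd hdh]
    have hA : ∀ e ∈ D, ∀ w : W, ‖Ainv e w‖ ≤ M * ‖w‖ := fun e he w =>
      (Ainv e).le_of_opNorm_le (hinv e he).2.2 w
    have hB : ∀ v : V, ‖B h v‖ ≤ ‖B‖ * ‖h‖ * ‖v‖ := fun v => B.le_opNorm₂ h v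
    calc _ ≤ M * (‖B‖ * ‖h‖ * (M * (‖B‖ * ‖h‖ * (M * ‖f‖)))) := by
          refine (hA _ hdh _).trans ?_
          gcongr
          refine (hB _).trans ?_
          gcongr
          refine (hA _ hd _).trans ?_
          gcongr
          refine (hB _).trans ?_
          gcongr
          exact hA _ hd _
      _ = _ := by ring
  refine ⟨key d h hd hdh f, est d h hd hdh, ?_⟩
  intro d' hd'
  rw [hasFDerivAt_iff_isLittleO_nhds_zero]
  have hev : ∀ᶠ k in nhds (0 : E), d' + k ∈ D := by
    have hc : Filter.Tendsto (fun k : E => d' + k) (nhds 0) (nhds d') := by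
      have : Continuous (fun k : E => d' + k) := by fun_prop
      simpa using this.tendsto 0
    exact hc (mem_interior_iff_mem_nhds.1 hd')
  refine Asymptotics.IsBigO.trans_isLittleO (g := fun k : E => ‖k‖ ^ 2) ?_
    (Asymptotics.isLittleO_norm_pow_id one_lt_two)
  refine Asymptotics.IsBigO.of_bound (M ^ 3 * ‖B‖ ^ 2 * ‖f‖) ?_
  filter_upwards [hev] with k hk
  have := est d' k (interior_subset hd') hk
  rw [Real.norm_of_nonneg (by positivity : (0:ℝ) ≤ ‖k‖ ^ 2)]
  refine le_trans (le_of_eq ?_) (this.trans (le_of_eq (by ring)))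
  rfl
end

section
/- Let y and y + h both be admissible sources (h measurable and bounded), fix d₀ ∈ [0, ω₀], and let ω_y and ω_{y+h} be the solutions of the damage integral equation with sources y and y + h respectively. Then there exists a unique continuous function w : [0,T] → ℝ satisfying the linearized integral equation w(t) = ∫₀ᵗ [ (1 − ω_y(ξ))^{−α} h(ξ) + α(1 − ω_y(ξ))^{−(α+1)} y(ξ) w(ξ) ] dξ for all t ∈ [0,T], and there is a constant C > 0 depending only on T, α, ω₀ and ω₁ such that max_{t∈[0,T]} |ω_{y+h}(t) − ω_y(t) − w(t)| ≤ C·( ess sup_{t∈[0,T]} |h(t)| )². In particular the solution map y ↦ ω_y is Fréchet differentiable with respect to the supremum norm and its derivative at y in direction h is w. -/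
open MeasureTheory Set

lemma ac_of_dist_le {f g : ℝ → ℝ} {a b : ℝ} (K : ℝ)
    (hg : AbsolutelyContinuousOnInterval g a b)
    (h : ∀ s ∈ uIcc a b, ∀ t ∈ uIcc a b, dist (f s) (f t) ≤ K * dist (g s) (g t)) :
    AbsolutelyContinuousOnInterval f a b := by
  unfold AbsolutelyContinuousOnInterval at hg ⊢
  have h2 := hg.const_mul K
  rw [mul_zero] at h2
  refine squeeze_zero' (Filter.Eventually.of_forall fun E => Finset.sum_nonneg fun _ _ => dist_nonneg)
    ?_ h2
  refine Filter.Eventually.filter_mono inf_le_right ?_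
  rw [Filter.eventually_principal]
  intro E hE
  rw [Finset.mul_sum]
  exact Finset.sum_le_sum fun i hi => h _ (hE.1 i hi).1 _ (hE.1 i hi).2

lemma prim_ac {T c : ℝ} {g u : ℝ → ℝ} (hT : 0 < T) (hg : IntervalIntegrable g volume 0 T)
    (hu : ∀ t ∈ Icc (0:ℝ) T, u t = c + ∫ ξ in (0:ℝ)..t, g ξ) :
    AbsolutelyContinuousOnInterval u 0 T ∧
      ∀ᵐ x, x ∈ Ioo (0:ℝ) T → HasDerivAt u (g x) x := by
  have hI : uIcc (0:ℝ) T = Icc 0 T := uIcc_of_le hT.le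
  constructor
  · refine ac_of_dist_le 1
      (hg.absolutelyContinuousOnInterval_intervalIntegral (c := 0) (by simp)) ?_
    intro s hs t ht
    rw [hI] at hs ht
    rw [hu s hs, hu t ht, dist_add_left, one_mul]
  · filter_upwards [hg.ae_hasDerivAt_integral] with x hx hxI
    have h1 := (hx (by rw [hI]; exact Ioo_subset_Icc_self hxI) 0 (by simp)).const_add c
    refine h1.congr_of_eventuallyEq ?_
    filter_upwards [Ioo_mem_nhds hxI.1 hxI.2] with z hz
    exact hu z (Ioo_subset_Icc_self hz)

lemma ac_prim {T : ℝ} {g u : ℝ → ℝ} (hT : 0 < T)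
    (hac : AbsolutelyContinuousOnInterval u 0 T)
    (hd : ∀ᵐ x, x ∈ Ioo (0:ℝ) T → HasDerivAt u (g x) x) :
    ∀ t ∈ Icc (0:ℝ) T, u t = u 0 + ∫ ξ in (0:ℝ)..t, g ξ := by
  intro t ht
  have h1 := (hac.mono (c := 0) (d := t) (by
    rw [uIcc_of_le hT.le, uIcc_of_le ht.1]; exact Icc_subset_Icc_right ht.2)).integral_deriv_eq_sub
  have h2 : ∫ ξ in (0:ℝ)..t, g ξ = ∫ ξ in (0:ℝ)..t, deriv u ξ := by
    apply intervalIntegral.integral_congr_ae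
    have hne : ∀ᵐ x : ℝ, x ≠ T := by simp [ae_iff, measure_singleton]
    filter_upwards [hd, hne] with x hx hxT hxI
    rw [uIoc_of_le ht.1] at hxI
    exact (hx ⟨hxI.1, lt_of_le_of_ne (hxI.2.trans ht.2) hxT⟩).deriv.symm
  rw [h2, h1]; ring

lemma pow_ac {T w1 p : ℝ} {u : ℝ → ℝ} (hT : 0 < T) (hw1 : w1 < 1)
    (hac : AbsolutelyContinuousOnInterval u 0 T) (hr : ∀ t ∈ Icc (0:ℝ) T, u t ∈ Icc (0:ℝ) w1) :
    AbsolutelyContinuousOnInterval (fun t => (1 - u t) ^ p) 0 T := by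
  have hc : ContDiffOn ℝ 1 (fun s : ℝ => (1 - s) ^ p) (Icc 0 w1) := by
    apply ContDiffOn.rpow_const_of_ne
    · fun_prop
    · intro x hx
      have := hx.2
      intro h
      linarith
  obtain ⟨K, hK⟩ := hc.exists_lipschitzOnWith (by decide) (convex_Icc _ _) isCompact_Icc
  refine ac_of_dist_le K hac ?_
  intro s hs t ht
  rw [uIcc_of_le hT.le] at hs ht
  exact hK.dist_le_mul _ (hr s hs) _ (hr t ht)

lemma pow_deriv {u : ℝ → ℝ} {x d : ℝ} (p : ℝ) (h : HasDerivAt u d x) (hx : u x < 1) :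
    HasDerivAt (fun t => (1 - u t) ^ p) (-d * p * (1 - u x) ^ (p - 1)) x :=
  (h.const_sub 1).rpow_const (Or.inl (by linarith))

lemma taylor_F {a w1 p q H : ℝ} (ha : 1 ≤ a) (hw1 : w1 < 1) (hp : p ∈ Icc (0:ℝ) w1)
    (hq : q ∈ Icc (0:ℝ) w1)
    (hH : (1 - p) ^ (a + 1) - (1 - q) ^ (a + 1) = (a + 1) * H) :
    |q - p - H * (1 - p) ^ (-a)| ≤ a * ((1 - w1) ^ a)⁻¹ ^ 3 * H ^ 2 := by
  have hm : 0 < (1 - w1) ^ a := Real.rpow_pos_of_pos (by linarith) _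
  have hle : ∀ s ∈ Icc (0:ℝ) w1, (1 - w1) ^ a ≤ (1 - s) ^ a := fun s hs =>
    Real.rpow_le_rpow (by linarith) (by linarith [hs.2]) (by linarith)
  have key : ∀ s t : ℝ, s ∈ Icc (0:ℝ) w1 → t ∈ Icc (0:ℝ) w1 → s < t →
      ∃ ξ ∈ Icc s t, (1 - s) ^ (a + 1) - (1 - t) ^ (a + 1) = (a + 1) * ((1 - ξ) ^ a * (t - s)) := by
    intro s t hs ht hst
    have hd : ∀ x ∈ Icc s t, HasDerivAt (fun x : ℝ => (1 - x) ^ (a + 1))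
        (-1 * (a + 1) * (1 - x) ^ (a + 1 - 1)) x := fun x hx =>
      pow_deriv (a + 1) (hasDerivAt_id x) (by simpa using lt_of_le_of_lt (hx.2.trans ht.2) hw1)
    obtain ⟨c, hc, hc2⟩ := exists_hasDerivAt_eq_slope (fun x : ℝ => (1 - x) ^ (a + 1))
      (fun x => -1 * (a + 1) * (1 - x) ^ (a + 1 - 1)) hst
      (fun x hx => (hd x hx).continuousAt.continuousWithinAt)
      (fun x hx => hd x (Ioo_subset_Icc_self hx))
    refine ⟨c, Ioo_subset_Icc_self hc, ?_⟩
    rw [eq_div_iff (by linarith)] at hc2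
    simp only [add_sub_cancel_right] at hc2
    linarith
  obtain ⟨ξ, hξ, hξp, hξH⟩ : ∃ ξ ∈ Icc (0:ℝ) w1, |ξ - p| ≤ |q - p| ∧ H = (1 - ξ) ^ a * (q - p) := by
    have ha1 : a + 1 ≠ 0 := by linarith
    rcases lt_trichotomy p q with h | h | h
    · obtain ⟨ξ, hξ, h2⟩ := key p q hp hq h
      refine ⟨ξ, ⟨hp.1.trans hξ.1, hξ.2.trans hq.2⟩, ?_, ?_⟩
      · rw [abs_of_nonneg (by linarith [hξ.1]), abs_of_pos (by linarith)]; linarith [hξ.2]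
      · exact mul_left_cancel₀ ha1 (hH.symm.trans h2)
    · subst h
      refine ⟨p, hp, le_rfl, ?_⟩
      apply mul_left_cancel₀ ha1
      rw [← hH]; ring
    · obtain ⟨ξ, hξ, h2⟩ := key q p hq hp h
      refine ⟨ξ, ⟨hq.1.trans hξ.1, hξ.2.trans hp.2⟩, ?_, ?_⟩
      · rw [abs_of_nonpos (by linarith [hξ.2]), abs_of_neg (by linarith)]; linarith [hξ.1]
      · apply mul_left_cancel₀ ha1; rw [← hH]; linarith
  have hlip : |(1 - ξ) ^ a - (1 - p) ^ a| ≤ a * |ξ - p| := by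
    have := (convex_Icc (0:ℝ) w1).norm_image_sub_le_of_norm_hasDerivWithin_le
      (f := fun x : ℝ => (1 - x) ^ a) (f' := fun x => -1 * a * (1 - x) ^ (a - 1)) (C := a)
      (fun x hx => (pow_deriv a (hasDerivAt_id x)
        (by simpa using lt_of_le_of_lt hx.2 hw1)).hasDerivWithinAt) (by
        intro x hx
        have h0 : 0 ≤ 1 - x := by linarith [hx.2]
        have h1 : (1 - x) ^ (a - 1) ≤ 1 :=
          Real.rpow_le_one h0 (by linarith [hx.1]) (by linarith)
        have h2 : 0 ≤ (1 - x) ^ (a - 1) := Real.rpow_nonneg h0 _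
        rw [Real.norm_eq_abs, abs_le]
        constructor <;> nlinarith) hp hξ
    simpa [Real.norm_eq_abs] using this
  set m := (1 - w1) ^ a with hmdef
  have hP := hle p hp
  have hX := hle ξ hξ
  rw [Real.rpow_neg (by linarith [hp.2])]
  set P := (1 - p) ^ a
  set X := (1 - ξ) ^ a
  have hP0 : 0 < P := hm.trans_le hP
  have e1 : q - p - H * P⁻¹ = P⁻¹ * (-(X - P) * (q - p)) := by
    rw [hξH]; field_simp; ring
  have hD : |q - p| ≤ m⁻¹ * |H| := by
    rw [hξH, abs_mul, abs_of_pos (hm.trans_le hX), inv_mul_eq_div, le_div_iff₀ hm]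
    nlinarith [abs_nonneg (q - p)]
  have hPi : P⁻¹ ≤ m⁻¹ := inv_anti₀ hm hP
  rw [e1, abs_mul, abs_mul, abs_neg, abs_of_pos (inv_pos.2 hP0)]
  have hX2 : |X - P| ≤ a * |q - p| := hlip.trans (by gcongr)
  have ha0 : 0 ≤ a := by linarith
  calc P⁻¹ * (|X - P| * |q - p|) ≤ m⁻¹ * ((a * |q - p|) * |q - p|) := by gcongr
    _ ≤ m⁻¹ * ((a * (m⁻¹ * |H|)) * (m⁻¹ * |H|)) := by gcongr
    _ = a * m⁻¹ ^ 3 * |H| ^ 2 := by ring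
    _ = a * m⁻¹ ^ 3 * H ^ 2 := by rw [sq_abs]

lemma cont_mul_integrable {T : ℝ} {f g : ℝ → ℝ} (hT : 0 < T) (hf : ContinuousOn f (Icc (0:ℝ) T))
    (hg : IntervalIntegrable g volume 0 T) :
    IntervalIntegrable (fun x => f x * g x) volume 0 T :=
  hg.continuousOn_mul (by rwa [uIcc_of_le hT.le])

lemma pow_cont {T w1 : ℝ} (p : ℝ) {u : ℝ → ℝ} (hw1 : w1 < 1)
    (hu : ContinuousOn u (Icc (0:ℝ) T)) (hr : ∀ t ∈ Icc (0:ℝ) T, u t ∈ Icc (0:ℝ) w1) :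
    ContinuousOn (fun t => (1 - u t) ^ p) (Icc (0:ℝ) T) :=
  (continuousOn_const.sub hu).rpow_const fun x hx => Or.inl (by
    have h1 := (hr x hx).2
    show (1 : ℝ) - u x ≠ 0
    linarith)

lemma bdd_integrable {T M : ℝ} {y : ℝ → ℝ} (hT : 0 < T) (hy : Measurable y)
    (hb : ∀ᵐ t ∂(volume.restrict (Icc (0 : ℝ) T)), |y t| ≤ M) :
    IntervalIntegrable y volume 0 T := by
  rw [intervalIntegrable_iff_integrableOn_Icc_of_le hT.le]
  exact Integrable.of_bound hy.aestronglyMeasurable M hb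

lemma solve_F {T a w1 d0 : ℝ} {y ω : ℝ → ℝ} (hT : 0 < T) (ha : 1 ≤ a) (hw1 : w1 < 1)
    (hy : IntervalIntegrable y volume 0 T) (h : SolvesDamage T a w1 d0 y ω) :
    ∀ t ∈ Icc (0:ℝ) T, (1 - ω t) ^ (a + 1) = (1 - d0) ^ (a + 1) - (a + 1) * ∫ ξ in (0:ℝ)..t, y ξ := by
  obtain ⟨hc, hr, he⟩ := h
  obtain ⟨hac, hd⟩ := prim_ac hT (cont_mul_integrable hT (pow_cont (-a) hw1 hc hr) hy) he
  intro t ht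
  have := ac_prim (g := fun x => -(a + 1) * y x) hT (pow_ac (p := a + 1) hT hw1 hac hr) (by
    filter_upwards [hd] with x hx hxI
    have hlt : ω x < 1 := lt_of_le_of_lt (hr x (Ioo_subset_Icc_self hxI)).2 hw1
    convert pow_deriv (a + 1) (hx hxI) hlt using 1
    rw [Real.rpow_neg (by linarith), add_sub_cancel_right]
    have : (1 - ω x) ^ a ≠ 0 := (Real.rpow_pos_of_pos (by linarith) _).ne'
    field_simp) t ht
  rw [this, intervalIntegral.integral_const_mul, he 0 ⟨le_rfl, hT.le⟩]
  simp
  ring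

/-- Fréchet differentiability of the source-to-damage map: the linearized
integral equation has a unique continuous solution `w`, and `w` approximates
`ω_{y+h} − ω_y` up to a quadratically small remainder. -/
theorem damage_solution_map_differentiable
    (T a w0 w1 : ℝ) (hT : 0 < T) (ha : 1 ≤ a)
    (hw0 : 0 ≤ w0) (hw01 : w0 ≤ w1) (hw1 : w1 < 1) :
    ∃ C > (0 : ℝ),
      ∀ y h : ℝ → ℝ,
        AdmissibleSource T a w0 w1 y →
        AdmissibleSource T a w0 w1 (fun t => y t + h t) →
        Measurable h →
        ∀ d0 ∈ Icc (0 : ℝ) w0, ∀ ωy ωyh : ℝ → ℝ,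
          SolvesDamage T a w1 d0 y ωy →
          SolvesDamage T a w1 d0 (fun t => y t + h t) ωyh →
          ∃ w : ℝ → ℝ,
            ContinuousOn w (Icc (0 : ℝ) T) ∧
            (∀ t ∈ Icc (0 : ℝ) T,
              w t = ∫ ξ in (0 : ℝ)..t,
                ((1 - ωy ξ) ^ (-a) * h ξ +
                  a * (1 - ωy ξ) ^ (-(a + 1)) * y ξ * w ξ)) ∧
            (∀ w' : ℝ → ℝ, ContinuousOn w' (Icc (0 : ℝ) T) →
              (∀ t ∈ Icc (0 : ℝ) T,
                w' t = ∫ ξ in (0 : ℝ)..t,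
                  ((1 - ωy ξ) ^ (-a) * h ξ +
                    a * (1 - ωy ξ) ^ (-(a + 1)) * y ξ * w' ξ)) →
              ∀ t ∈ Icc (0 : ℝ) T, w' t = w t) ∧
            sSup ((fun t => |ωyh t - ωy t - w t|) '' Icc (0 : ℝ) T) ≤
              C * (essSup (fun t => |h t|) (volume.restrict (Icc (0 : ℝ) T))) ^ 2 := by
  have hm : 0 < (1 - w1) ^ a := Real.rpow_pos_of_pos (by linarith) _
  refine ⟨a * ((1 - w1) ^ a)⁻¹ ^ 3 * T ^ 2, by positivity, ?_⟩
  intro y h hy hyh hhm d0 hd0 ωy ωyh hsy hsyh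
  set M := T⁻¹ * (w1 - w0) * (1 - w1) ^ a with hM
  have hyI : IntervalIntegrable y volume 0 T := by
    refine bdd_integrable (M := M) hT hy.1 ?_
    filter_upwards [hy.2] with t ht
    rw [abs_of_nonneg ht.1]; exact ht.2
  have hhb : ∀ᵐ t ∂(volume.restrict (Icc (0 : ℝ) T)), |h t| ≤ M := by
    filter_upwards [hy.2, hyh.2] with t ht ht2
    rw [abs_le]
    constructor <;> linarith [ht.1, ht.2, ht2.1, ht2.2]
  have hhI : IntervalIntegrable h volume 0 T := bdd_integrable hT hhm hhb
  have hFy := solve_F hT ha hw1 hyI hsy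
  have hFyh := solve_F hT ha hw1 (hyI.add hhI) hsyh
  obtain ⟨hc, hr, he⟩ := hsy
  obtain ⟨hac, hd⟩ := prim_ac hT (cont_mul_integrable hT (pow_cont (-a) hw1 hc hr) hyI) he
  obtain ⟨hHac, hHd⟩ := prim_ac (c := 0) (u := fun t => ∫ ξ in (0:ℝ)..t, h ξ) hT hhI
    (fun t _ => by simp)
  have hwac := hHac.mul (pow_ac (p := -a) hT hw1 hac hr)
  have hwcont := hwac.continuousOn
  rw [uIcc_of_le hT.le] at hwcont
  refine ⟨fun t => (∫ ξ in (0:ℝ)..t, h ξ) * (1 - ωy t) ^ (-a), hwcont, ?_, ?_, ?_⟩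
  · intro t ht
    have := ac_prim (g := fun ξ => (1 - ωy ξ) ^ (-a) * h ξ + a * (1 - ωy ξ) ^ (-(a + 1)) * y ξ *
      ((∫ s in (0:ℝ)..ξ, h s) * (1 - ωy ξ) ^ (-a))) hT hwac (by
      filter_upwards [hd, hHd] with x hx hHx hxI
      have hlt : ωy x < 1 := lt_of_le_of_lt (hr x (Ioo_subset_Icc_self hxI)).2 hw1
      refine ((hHx hxI).mul (pow_deriv (-a) (hx hxI) hlt)).congr_deriv ?_
      rw [show -a - 1 = -(a + 1) by ring]
      ring) t ht
    simpa using this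
  · intro w' hw'c hw' t ht
    have hgI : IntervalIntegrable (fun ξ => (1 - ωy ξ) ^ (-a) * h ξ +
        a * (1 - ωy ξ) ^ (-(a + 1)) * y ξ * w' ξ) volume 0 T := by
      refine (cont_mul_integrable hT (pow_cont (-a) hw1 hc hr) hhI).add ?_
      have := cont_mul_integrable hT
        ((continuousOn_const (c := a)).mul ((pow_cont (-(a+1)) hw1 hc hr).mul hw'c)) hyI
      refine this.congr (fun x _ => ?_)
      simp only [Pi.mul_apply]
      ring
    obtain ⟨hvac, hvd⟩ := prim_ac (c := 0) (u := w') hT hgI (fun t ht => by rw [zero_add]; exact hw' t ht)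
    have := ac_prim (g := h) hT (hvac.mul (pow_ac (p := a) hT hw1 hac hr)) (by
      filter_upwards [hd, hvd] with x hx hHx hxI
      have hlt : ωy x < 1 := lt_of_le_of_lt (hr x (Ioo_subset_Icc_self hxI)).2 hw1
      have hpos : 0 < 1 - ωy x := by linarith
      refine ((hHx hxI).mul (pow_deriv a (hx hxI) hlt)).congr_deriv ?_
      have e1 : (1 - ωy x) ^ (-a) * (1 - ωy x) ^ a = 1 := by
        rw [← Real.rpow_add hpos]; simp
      have e2 : (1 - ωy x) ^ (-(a + 1)) * (1 - ωy x) ^ a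
          = (1 - ωy x) ^ (-a) * (1 - ωy x) ^ (a - 1) := by
        rw [← Real.rpow_add hpos, ← Real.rpow_add hpos]; congr 1; ring
      linear_combination (h x) * e1 + (a * y x * w' x) * e2) t ht
    have h0 : w' 0 = 0 := by rw [hw' 0 ⟨le_rfl, hT.le⟩]; simp
    simp only [Pi.mul_apply, h0, zero_mul, zero_add] at this
    have hpos : 0 < 1 - ωy t := by linarith [(hr t ht).2]
    show w' t = (∫ ξ in (0:ℝ)..t, h ξ) * (1 - ωy t) ^ (-a)
    rw [← this, mul_assoc, ← Real.rpow_add hpos]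
    simp
  · apply csSup_le ((nonempty_Icc.2 hT.le).image _)
    rintro _ ⟨t, ht, rfl⟩
    set E := essSup (fun t => |h t|) (volume.restrict (Icc (0 : ℝ) T)) with hE
    have hEb : ∀ᵐ t ∂(volume.restrict (Icc (0 : ℝ) T)), |h t| ≤ E :=
      ae_le_essSup ⟨M, by simpa using hhb⟩
    have hint : ∫ ξ in (0:ℝ)..t, (y ξ + h ξ) =
        (∫ ξ in (0:ℝ)..t, y ξ) + ∫ ξ in (0:ℝ)..t, h ξ := by
      have hsub : uIcc 0 t ⊆ uIcc 0 T := by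
        rw [uIcc_of_le hT.le, uIcc_of_le ht.1]; exact Icc_subset_Icc_right ht.2
      exact intervalIntegral.integral_add (hyI.mono_set hsub) (hhI.mono_set hsub)
    have h1 := taylor_F (H := ∫ ξ in (0:ℝ)..t, h ξ) ha hw1 (hr t ht) (hsyh.2.1 t ht) (by
      rw [hFy t ht, hFyh t ht, hint]; ring)
    have hHb : |∫ ξ in (0:ℝ)..t, h ξ| ≤ E * |t - 0| := by
      rw [← Real.norm_eq_abs]
      apply intervalIntegral.norm_integral_le_of_norm_le_const_ae
      rw [ae_restrict_iff' measurableSet_Icc] at hEb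
      filter_upwards [hEb] with x hx hxI
      rw [uIoc_of_le ht.1] at hxI
      exact hx ⟨hxI.1.le, hxI.2.trans ht.2⟩
    have hE0 : 0 ≤ E := by
      have hne : (ae (volume.restrict (Icc (0 : ℝ) T))).NeBot := by
        rw [ae_neBot]
        intro h0
        have := congrArg (fun μ => μ univ) h0
        simp [hT.not_ge] at this
      obtain ⟨x, hx⟩ := hEb.exists
      exact (abs_nonneg _).trans hx
    have hHb2 : |∫ ξ in (0:ℝ)..t, h ξ| ≤ T * E := by
      refine hHb.trans ?_
      rw [sub_zero, abs_of_nonneg ht.1]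
      nlinarith [ht.2]
    have hsq : (∫ ξ in (0:ℝ)..t, h ξ) ^ 2 ≤ (T * E) ^ 2 := by
      rw [← sq_abs]
      gcongr
    refine h1.trans ?_
    calc _ ≤ a * ((1 - w1) ^ a)⁻¹ ^ 3 * (T * E) ^ 2 := by gcongr
      _ = _ := by ring
end

section
/- Let X be an infinite-dimensional real Hilbert space, Y and Z real normed spaces, ι : X → Y a compact linear operator, and Φ : Y → Z a Lipschitz continuous map. Then the problem of recovering g from Φ(ι(g)) is locally ill-posed at every point: for every g ∈ X and every r > 0 there exists a sequence (g_n)_{n∈ℕ} in X with ‖g_n − g‖_X = r for every n (so that in particular g_n does not converge to g in X) while ‖Φ(ι(g_n)) − Φ(ι(g))‖_Z → 0 as n → ∞. -/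
open Filter

/-- Local ill-posedness at every point: if `X` is an infinite-dimensional real
Hilbert space, `ι : X → Y` a compact linear operator and `Φ : Y → Z` Lipschitz,
then for every `g` and `r > 0` there is a sequence at distance exactly `r` from
`g` whose images under `Φ ∘ ι` converge to the image of `g`. -/
theorem compact_composition_locally_ill_posed
    {X Y Z : Type*}
    [NormedAddCommGroup X] [InnerProductSpace ℝ X] [CompleteSpace X]
    [NormedAddCommGroup Y] [NormedSpace ℝ Y]
    [NormedAddCommGroup Z] [NormedSpace ℝ Z]
    (hX : ¬ FiniteDimensional ℝ X)
    (ι : X →L[ℝ] Y)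
    (hι : ∀ s : Set X, Bornology.IsBounded s → IsCompact (closure (ι '' s)))
    (Φ : Y → Z) (L : NNReal) (hΦ : LipschitzWith L Φ)
    (g : X) (r : ℝ) (hr : 0 < r) :
    ∃ gs : ℕ → X, (∀ n, ‖gs n - g‖ = r) ∧
      Tendsto (fun n => ‖Φ (ι (gs n)) - Φ (ι g)‖) atTop (nhds 0) := by
  obtain ⟨R, f, -, hfR, hf1⟩ := exists_seq_norm_le_one_le_norm_sub (𝕜 := ℝ) (E := X) hX
  have hb : Bornology.IsBounded (Set.range f) := by
    rw [isBounded_iff_forall_norm_le]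
    exact ⟨R, by rintro _ ⟨n, rfl⟩; exact hfR n⟩
  obtain ⟨y, -, φ, hφ, hlim⟩ := (hι _ hb).tendsto_subseq (x := fun n => ι (f n))
    (fun n => subset_closure ⟨f n, ⟨n, rfl⟩, rfl⟩)
  have hd1 : ∀ n, 1 ≤ ‖f (φ (n + 1)) - f (φ n)‖ := fun n =>
    hf1 (hφ (Nat.lt_succ_self n)).ne'
  have hd0 : Tendsto (fun n => ‖ι (f (φ (n + 1)) - f (φ n))‖) atTop (nhds 0) := by
    have h := ((hlim.comp (tendsto_add_atTop_nat 1)).sub hlim).norm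
    simpa using h
  generalize hd : (fun n => f (φ (n + 1)) - f (φ n)) = d at *
  have hdn : ∀ n, f (φ (n + 1)) - f (φ n) = d n := fun n => congrFun hd n
  simp only [hdn] at hd1 hd0
  refine ⟨fun n => g + (r / ‖d n‖) • d n, fun n => ?_, ?_⟩
  · have h0 : 0 < ‖d n‖ := lt_of_lt_of_le one_pos (hd1 n)
    rw [add_sub_cancel_left, norm_smul, Real.norm_of_nonneg (by positivity)]
    field_simp
  · refine squeeze_zero (g := fun n => (L : ℝ) * (r * ‖ι (d n)‖)) (fun n => norm_nonneg _)
      (fun n => ?_) ?_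
    · have h := hΦ.norm_sub_le (ι (g + (r / ‖d n‖) • d n)) (ι g)
      refine h.trans (mul_le_mul_of_nonneg_left ?_ L.2)
      rw [map_add, add_sub_cancel_left, map_smul, norm_smul,
        Real.norm_of_nonneg (by positivity)]
      exact mul_le_mul_of_nonneg_right (div_le_self hr.le (hd1 n)) (norm_nonneg _)
    · simpa using (hd0.const_mul r).const_mul (L : ℝ)
end

section
/- Let Ω ⊆ ℝ^k be a Lebesgue-measurable set, d₀ : Ω → ℝ a measurable function with 0 ≤ d₀(x) ≤ ω₀ for all x ∈ Ω, and y : [0,T] × Ω → ℝ a measurable function with 0 ≤ y(t,x) ≤ M for all (t,x). Then there exists a function d : [0,T] × Ω → ℝ such that: (i) for every x ∈ Ω the function t ↦ d(t,x) is continuous, takes values in [0, ω₁], and satisfies d(t,x) = d₀(x) + ∫₀ᵗ (1 − d(ξ,x))^{−α} y(ξ,x) dξ for all t ∈ [0,T]; (ii) for every t ∈ [0,T] the function x ↦ d(t,x) is measurable; (iii) for every x ∈ Ω and all t₁, t₂ ∈ [0,T] one has |d(t₁,x) − d(t₂,x)| ≤ T⁻¹(ω₁ − ω₀)|t₁ −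 t₂|. Moreover, d is uniquely determined by (i). -/
open MeasureTheory Set

lemma dmg_chain (φ φ' : ℝ → ℝ) (l r t c C : ℝ) (ht : 0 ≤ t) (v : ℝ → ℝ)
    (hv : IntervalIntegrable v volume 0 t) (hvC : ∀ s ∈ Icc 0 t, |v s| ≤ C)
    (hU : ∀ s ∈ Icc 0 t, c + ∫ ξ in (0:ℝ)..s, v ξ ∈ Icc l r)
    (hφ : ∀ x ∈ Icc l r, HasDerivAt φ (φ' x) x) (hφ' : ContinuousOn φ' (Icc l r)) :
    ∫ s in (0:ℝ)..t, φ' (c + ∫ ξ in (0:ℝ)..s, v ξ) * v s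
      = φ (c + ∫ ξ in (0:ℝ)..t, v ξ) - φ c := by
  obtain ⟨K, hK⟩ := isCompact_Icc.exists_bound_of_continuousOn hφ'
  have h0 : (0:ℝ) ∈ Icc 0 t := ⟨le_rfl, ht⟩
  have hK0 : 0 ≤ K := (norm_nonneg _).trans (hK _ (hU 0 h0))
  have hC0 : 0 ≤ C := (abs_nonneg _).trans (hvC 0 h0)
  have hsub : ∀ s ∈ Icc 0 t, IntervalIntegrable v volume 0 s := fun s hs =>
    hv.mono_set (by rw [uIcc_of_le hs.1, uIcc_of_le ht]; exact Icc_subset_Icc le_rfl hs.2)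
  have hULip : ∀ s₁ ∈ Icc 0 t, ∀ s₂ ∈ Icc 0 t,
      |(c + ∫ ξ in (0:ℝ)..s₁, v ξ) - (c + ∫ ξ in (0:ℝ)..s₂, v ξ)| ≤ C * |s₁ - s₂| := by
    intro s₁ h₁ s₂ h₂
    rw [add_sub_add_left_eq_sub, intervalIntegral.integral_interval_sub_left (hsub _ h₁) (hsub _ h₂),
      ← Real.norm_eq_abs]
    apply intervalIntegral.norm_integral_le_of_norm_le_const
    intro x hx
    have hx' := uIoc_subset_uIcc hx
    exact hvC x ((uIcc_subset_Icc h₂ h₁) hx')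
  have hφLip : ∀ x ∈ Icc l r, ∀ z ∈ Icc l r, |φ x - φ z| ≤ K * |x - z| := by
    intro x hx z hz
    exact (convex_Icc l r).norm_image_sub_le_of_norm_hasDerivWithin_le
      (fun w hw => (hφ w hw).hasDerivWithinAt) hK hz hx
  have hAC : AbsolutelyContinuousOnInterval (fun s => φ (c + ∫ ξ in (0:ℝ)..s, v ξ)) 0 t := by
    have : LipschitzOnWith (K * C).toNNReal (fun s => φ (c + ∫ ξ in (0:ℝ)..s, v ξ)) (uIcc 0 t) := by
      apply LipschitzOnWith.of_dist_le_mul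
      rw [uIcc_of_le ht]
      intro s₁ h₁ s₂ h₂
      rw [Real.coe_toNNReal _ (mul_nonneg hK0 hC0), Real.dist_eq, Real.dist_eq, mul_assoc]
      exact (hφLip _ (hU _ h₁) _ (hU _ h₂)).trans
        (mul_le_mul_of_nonneg_left (hULip _ h₁ _ h₂) hK0)
    exact this.absolutelyContinuousOnInterval
  have := hAC.integral_deriv_eq_sub
  simp only [intervalIntegral.integral_same, add_zero] at this
  rw [← this]
  apply intervalIntegral.integral_congr_ae
  filter_upwards [hv.ae_hasDerivAt_integral] with x hx hx3
  have hx4 : x ∈ uIcc 0 t := uIoc_subset_uIcc hx3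
  have h5 := (hx hx4 0 (by simp)).const_add c
  rw [uIcc_of_le ht] at hx4
  exact ((hφ _ (hU x hx4)).comp x h5).deriv.symm

/-- Integrability of a product on an initial interval. -/
lemma dmg_int (T : ℝ) (f g : ℝ → ℝ) (C D t : ℝ) (ht : t ∈ Icc 0 T)
    (hf : ContinuousOn f (Icc 0 T)) (hg : Measurable fun s : Icc (0:ℝ) T => g s)
    (hfC : ∀ s ∈ Icc 0 T, |f s| ≤ C) (hgD : ∀ s ∈ Icc 0 T, |g s| ≤ D) :
    IntervalIntegrable (fun s => f s * g s) volume 0 t := by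
  have hg' : AEStronglyMeasurable g (volume.restrict (Icc 0 T)) :=
    ((aemeasurable_restrict_iff_comap_subtype measurableSet_Icc).2
      hg.aemeasurable).aestronglyMeasurable
  have hf' : AEStronglyMeasurable f (volume.restrict (Icc 0 T)) :=
    hf.aestronglyMeasurable measurableSet_Icc
  have : IntegrableOn (fun s => f s * g s) (Icc 0 T) := by
    refine Integrable.of_bound (hf'.mul hg') (C * D) ?_
    refine (ae_restrict_iff' measurableSet_Icc).2 (Filter.Eventually.of_forall fun s hs => ?_)
    rw [Real.norm_eq_abs, abs_mul]
    exact mul_le_mul (hfC s hs) (hgD s hs) (abs_nonneg _) ((abs_nonneg _).trans (hfC s hs))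
  rw [intervalIntegrable_iff_integrableOn_Icc_of_le ht.1]
  exact this.mono_set (Icc_subset_Icc le_rfl ht.2)

lemma dmg_conv (a w0 w1 : ℝ) (ha : 1 ≤ a) (hw01 : w0 ≤ w1) (hw1 : w1 < 1) :
    (1 - w1) ^ (a + 1) + (a + 1) * ((w1 - w0) * (1 - w1) ^ a) ≤ (1 - w0) ^ (a + 1) := by
  have h1 : 0 < 1 - w1 := by linarith
  have hb := one_add_mul_self_le_rpow_one_add (s := (w1 - w0) / (1 - w1)) (p := a + 1)
    (by have : 0 ≤ (w1 - w0) / (1 - w1) := div_nonneg (by linarith) h1.le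
        linarith) (by linarith)
  have e : 1 + (w1 - w0) / (1 - w1) = (1 - w0) / (1 - w1) := by field_simp; ring
  rw [e, Real.div_rpow (by linarith) h1.le, le_div_iff₀ (by positivity)] at hb
  refine le_trans (le_of_eq ?_) hb
  rw [Real.rpow_add h1, Real.rpow_one]
  field_simp

/-- Pointwise-in-space solvability of the damage evolution: there is a unique
function `d(t,x)` which, for every `x ∈ Ω`, continuously solves the damage
integral equation in time with initial value `d₀(x)` and source `y(·,x)`;
it is measurable in `x` for every fixed `t` and Lipschitz in `t` with constant
`T⁻¹(ω₁ − ω₀)`. -/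
theorem damage_field_existence_uniqueness
    (T a w0 w1 : ℝ) (hT : 0 < T) (ha : 1 ≤ a)
    (hw0 : 0 ≤ w0) (hw01 : w0 ≤ w1) (hw1 : w1 < 1)
    (k : ℕ) (Ω : Set (Fin k → ℝ)) (hΩ : MeasurableSet Ω)
    (d0 : (Fin k → ℝ) → ℝ)
    (hd0_meas : Measurable fun x : Ω => d0 x)
    (hd0_b : ∀ x ∈ Ω, d0 x ∈ Icc (0 : ℝ) w0)
    (y : ℝ → (Fin k → ℝ) → ℝ)
    (hy_meas : Measurable fun p : Icc (0 : ℝ) T × Ω => y p.1 p.2)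
    (hy_b : ∀ t ∈ Icc (0 : ℝ) T, ∀ x ∈ Ω,
      y t x ∈ Icc (0 : ℝ) (T⁻¹ * (w1 - w0) * (1 - w1) ^ a)) :
    ∃ d : ℝ → (Fin k → ℝ) → ℝ,
      (∀ x ∈ Ω,
        ContinuousOn (fun t => d t x) (Icc (0 : ℝ) T) ∧
        (∀ t ∈ Icc (0 : ℝ) T, d t x ∈ Icc (0 : ℝ) w1) ∧
        (∀ t ∈ Icc (0 : ℝ) T,
          d t x = d0 x + ∫ ξ in (0 : ℝ)..t, (1 - d ξ x) ^ (-a) * y ξ x)) ∧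
      (∀ t ∈ Icc (0 : ℝ) T, Measurable fun x : Ω => d t x) ∧
      (∀ x ∈ Ω, ∀ t₁ ∈ Icc (0 : ℝ) T, ∀ t₂ ∈ Icc (0 : ℝ) T,
        |d t₁ x - d t₂ x| ≤ T⁻¹ * (w1 - w0) * |t₁ - t₂|) ∧
      (∀ d' : ℝ → (Fin k → ℝ) → ℝ,
        (∀ x ∈ Ω,
          ContinuousOn (fun t => d' t x) (Icc (0 : ℝ) T) ∧
          (∀ t ∈ Icc (0 : ℝ) T, d' t x ∈ Icc (0 : ℝ) w1) ∧
          (∀ t ∈ Icc (0 : ℝ) T,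
            d' t x = d0 x + ∫ ξ in (0 : ℝ)..t, (1 - d' ξ x) ^ (-a) * y ξ x)) →
        ∀ x ∈ Ω, ∀ t ∈ Icc (0 : ℝ) T, d' t x = d t x) := by
  set L := T⁻¹ * (w1 - w0) with hL
  have hLT : L * T = w1 - w0 := by rw [hL]; field_simp
  have hL0 : 0 ≤ L := by rw [hL]; exact mul_nonneg (by positivity) (by linarith)
  have h1 : 0 < 1 - w1 := by linarith
  have ha1 : a + 1 ≠ 0 := by linarith
  have ha1' : 0 < a + 1 := by linarith
  set M := L * (1 - w1) ^ a with hM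
  have hM0 : 0 ≤ M := by positivity
  have hyx : ∀ x ∈ Ω, Measurable fun s : Icc (0:ℝ) T => y s x := fun x hx =>
    hy_meas.comp (measurable_id.prodMk (measurable_const (a := (⟨x, hx⟩ : Ω))))
  have hyabs : ∀ x ∈ Ω, ∀ s ∈ Icc (0:ℝ) T, |y s x| ≤ M := fun x hx s hs => by
    rw [abs_of_nonneg (hy_b s hs x hx).1]; exact (hy_b s hs x hx).2
  have hyint : ∀ x ∈ Ω, ∀ t ∈ Icc (0:ℝ) T, IntervalIntegrable (fun s => y s x) volume 0 t := by
    intro x hx t ht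
    simpa using dmg_int T (fun _ => 1) (fun s => y s x) 1 M t ht continuousOn_const (hyx x hx)
      (by simp) (hyabs x hx)
  let U : ℝ → (Fin k → ℝ) → ℝ := fun t x =>
    (1 - d0 x) ^ (a + 1) + ∫ ξ in (0:ℝ)..t, -(a + 1) * y ξ x
  let d : ℝ → (Fin k → ℝ) → ℝ := fun t x => 1 - (U t x) ^ (1 / (a + 1))
  -- bounds
  have hl0 : 0 < (1 - w1) ^ (a + 1) := by positivity
  have hU : ∀ x ∈ Ω, ∀ t ∈ Icc (0:ℝ) T, U t x ∈ Icc ((1 - w1) ^ (a + 1)) 1 := by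
    intro x hx t ht
    have hd := hd0_b x hx
    have hI0 : 0 ≤ ∫ ξ in (0:ℝ)..t, y ξ x :=
      intervalIntegral.integral_nonneg ht.1 fun s hs => (hy_b s ⟨hs.1, hs.2.trans ht.2⟩ x hx).1
    have hI1 : ∫ ξ in (0:ℝ)..t, y ξ x ≤ (w1 - w0) * (1 - w1) ^ a := by
      have : ∫ ξ in (0:ℝ)..t, y ξ x ≤ ∫ ξ in (0:ℝ)..t, M :=
        intervalIntegral.integral_mono_on ht.1 (hyint x hx t ht) (by simp)
          fun s hs => (hy_b s ⟨hs.1, hs.2.trans ht.2⟩ x hx).2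
      rw [intervalIntegral.integral_const, smul_eq_mul, sub_zero] at this
      have h2 : t * M ≤ T * M := mul_le_mul_of_nonneg_right ht.2 hM0
      have h3 : T * M = (w1 - w0) * (1 - w1) ^ a := by rw [hM, ← hLT]; ring
      linarith
    have hc := dmg_conv a w0 w1 ha hw01 hw1
    have hm : (1 - w0) ^ (a + 1) ≤ (1 - d0 x) ^ (a + 1) :=
      Real.rpow_le_rpow (by linarith) (by linarith [hd.2]) ha1'.le
    have hm1 : (1 - d0 x) ^ (a + 1) ≤ 1 :=
      Real.rpow_le_one (by linarith [hd.2]) (by linarith [hd.1]) ha1'.le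
    simp only [U, intervalIntegral.integral_const_mul]
    constructor <;> nlinarith
  have hd_mem : ∀ x ∈ Ω, ∀ t ∈ Icc (0:ℝ) T, d t x ∈ Icc (0:ℝ) w1 := by
    intro x hx t ht
    have hu := hU x hx t ht
    have h2 : (U t x) ^ (1 / (a + 1)) ≤ 1 :=
      Real.rpow_le_one (hl0.le.trans hu.1) hu.2 (by positivity)
    have h3 : 1 - w1 ≤ (U t x) ^ (1 / (a + 1)) := by
      have := Real.rpow_le_rpow hl0.le hu.1 (z := 1 / (a + 1)) (by positivity)
      rwa [← Real.rpow_mul h1.le, mul_one_div_cancel ha1, Real.rpow_one] at this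
    exact ⟨by simp only [d]; linarith, by simp only [d]; linarith⟩
  have hd_zero : ∀ x ∈ Ω, ((1 - d0 x) ^ (a + 1)) ^ (1 / (a + 1)) = 1 - d0 x := by
    intro x hx
    rw [← Real.rpow_mul (by linarith [(hd0_b x hx).2]), mul_one_div_cancel ha1, Real.rpow_one]
  have hd_eq : ∀ x ∈ Ω, ∀ t ∈ Icc (0:ℝ) T,
      d t x = d0 x + ∫ ξ in (0 : ℝ)..t, (1 - d ξ x) ^ (-a) * y ξ x := by
    intro x hx t ht
    have hch := dmg_chain (fun z => z ^ (1 / (a + 1)))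
      (fun z => (1 / (a + 1)) * z ^ (1 / (a + 1) - 1)) ((1 - w1) ^ (a + 1)) 1 t
      ((1 - d0 x) ^ (a + 1)) ((a + 1) * M) ht.1 (fun s => -(a + 1) * y s x)
      ((hyint x hx t ht).const_mul _)
      (by
        intro s hs
        rw [abs_mul, abs_neg, abs_of_pos ha1']
        exact mul_le_mul_of_nonneg_left (hyabs x hx s ⟨hs.1, hs.2.trans ht.2⟩) ha1'.le)
      (fun s hs => hU x hx s ⟨hs.1, hs.2.trans ht.2⟩)
      (fun z hz => Real.hasDerivAt_rpow_const (Or.inl (hl0.trans_le hz.1).ne'))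
      (by
        apply continuousOn_const.mul
        exact continuousOn_id.rpow_const fun z hz => Or.inl (hl0.trans_le hz.1).ne')
    have hcongr : ∫ ξ in (0 : ℝ)..t, (1 - d ξ x) ^ (-a) * y ξ x =
        - ∫ s in (0:ℝ)..t, (1 / (a + 1) * U s x ^ (1 / (a + 1) - 1)) * (-(a + 1) * y s x) := by
      rw [← intervalIntegral.integral_neg]
      apply intervalIntegral.integral_congr
      intro s hs
      rw [uIcc_of_le ht.1] at hs
      have hu := hU x hx s ⟨hs.1, hs.2.trans ht.2⟩
      have e1 : (1 - d s x) ^ (-a) = U s x ^ (1 / (a + 1) - 1) := by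
        simp only [d, sub_sub_cancel]
        rw [← Real.rpow_mul (hl0.le.trans hu.1)]
        congr 1
        field_simp
        ring
      simp only [e1]
      field_simp
    rw [hcongr]
    simp only [hd_zero x hx] at hch
    change ∫ s in (0:ℝ)..t, (1 / (a + 1) * U s x ^ (1 / (a + 1) - 1)) * (-(a + 1) * y s x)
      = U t x ^ (1 / (a + 1)) - (1 - d0 x) at hch
    rw [hch]
    simp only [d]
    ring
  have hpow : ∀ z ∈ Icc (0:ℝ) w1, |(1 - z) ^ (-a)| ≤ (1 - w1) ^ (-a) := by
    intro z hz
    rw [abs_of_nonneg (Real.rpow_nonneg (by linarith [hz.2]) _)]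
    exact Real.rpow_le_rpow_of_nonpos h1 (by linarith [hz.2]) (by linarith)
  have hML : (1 - w1) ^ (-a) * M = L := by
    rw [hM, mul_left_comm, ← Real.rpow_add h1]; simp
  -- integrability and bound for solutions
  have hvb : ∀ x ∈ Ω, ∀ u : ℝ → ℝ, (∀ t ∈ Icc (0:ℝ) T, u t ∈ Icc (0:ℝ) w1) →
      ∀ s ∈ Icc (0:ℝ) T, |(1 - u s) ^ (-a) * y s x| ≤ L := by
    intro x hx u hu s hs
    rw [abs_mul, ← hML]
    exact mul_le_mul (hpow _ (hu s hs)) (hyabs x hx s hs) (abs_nonneg _) (by positivity)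
  have hvi : ∀ x ∈ Ω, ∀ u : ℝ → ℝ, ContinuousOn u (Icc 0 T) →
      (∀ t ∈ Icc (0:ℝ) T, u t ∈ Icc (0:ℝ) w1) →
      ∀ t ∈ Icc (0:ℝ) T, IntervalIntegrable (fun s => (1 - u s) ^ (-a) * y s x) volume 0 t := by
    intro x hx u huc hu t ht
    refine dmg_int T (fun s => (1 - u s) ^ (-a)) (fun s => y s x) _ M t ht ?_ (hyx x hx)
      (fun s hs => hpow _ (hu s hs)) (hyabs x hx)
    exact (continuousOn_const.sub huc).rpow_const fun s hs =>
      Or.inl (by linarith [(hu s hs).2] : (0:ℝ) < 1 - u s).ne'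
  have hd_cont : ∀ x ∈ Ω, ContinuousOn (fun t => d t x) (Icc (0 : ℝ) T) := by
    intro x hx
    apply continuousOn_const.sub
    refine ContinuousOn.rpow_const ?_ fun s hs => Or.inl (hl0.trans_le (hU x hx s hs).1).ne'
    apply continuousOn_const.add
    have hi := (hyint x hx T ⟨hT.le, le_rfl⟩).const_mul (-(a + 1))
    have := intervalIntegral.continuousOn_primitive_interval' hi left_mem_uIcc
    rwa [uIcc_of_le hT.le] at this
  refine ⟨d, fun x hx => ⟨hd_cont x hx, hd_mem x hx, hd_eq x hx⟩, ?_, ?_, ?_⟩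
  · intro t ht
    have hm : Measurable fun x : Ω => ∫ ξ in (0:ℝ)..t, -(a + 1) * y ξ x := by
      have e : (fun x : Ω => ∫ ξ in (0:ℝ)..t, -(a + 1) * y ξ x) =
          fun x : Ω => ∫ ξ in Ioc 0 t, -(a + 1) * y (projIcc 0 T hT.le ξ) x := by
        funext x
        rw [intervalIntegral.integral_of_le ht.1]
        apply setIntegral_congr_fun measurableSet_Ioc
        intro s hs
        simp only
        rw [projIcc_of_mem hT.le ⟨hs.1.le, hs.2.trans ht.2⟩]
      rw [e]
      have hp : Measurable fun p : Ω × ℝ => -(a + 1) * y (projIcc 0 T hT.le p.2) p.1 := by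
        apply Measurable.const_mul
        exact hy_meas.comp
          (((continuous_projIcc (h := hT.le)).measurable.comp measurable_snd).prodMk measurable_fst)
      exact (hp.stronglyMeasurable.integral_prod_right' (ν := volume.restrict (Ioc 0 t))).measurable
    exact measurable_const.sub
      ((((measurable_const.sub hd0_meas).pow_const _).add hm).pow_const _)
  · intro x hx t₁ h₁ t₂ h₂
    have hi := hvi x hx (fun s => d s x) (hd_cont x hx) (hd_mem x hx)
    rw [hd_eq x hx t₁ h₁, hd_eq x hx t₂ h₂, add_sub_add_left_eq_sub,
      intervalIntegral.integral_interval_sub_left (hi _ h₁) (hi _ h₂), ← Real.norm_eq_abs]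
    apply intervalIntegral.norm_integral_le_of_norm_le_const
    intro s hs
    exact hvb x hx (fun s => d s x) (hd_mem x hx) s
      ((uIcc_subset_Icc h₂ h₁) (uIoc_subset_uIcc hs))
  · intro d' hd' x hx t ht
    obtain ⟨hc, hm, he⟩ := hd' x hx
    have hch := dmg_chain (fun z => (1 - z) ^ (a + 1))
      (fun z => -1 * (a + 1) * (1 - z) ^ (a + 1 - 1)) 0 w1 t (d0 x) L ht.1
      (fun s => (1 - d' s x) ^ (-a) * y s x)
      (hvi x hx (fun s => d' s x) hc hm t ht)
      (fun s hs => hvb x hx (fun s => d' s x) hm s ⟨hs.1, hs.2.trans ht.2⟩)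
      (fun s hs => by
        rw [← he s ⟨hs.1, hs.2.trans ht.2⟩]
        exact hm s ⟨hs.1, hs.2.trans ht.2⟩)
      (fun z hz => ((hasDerivAt_id z).const_sub 1).rpow_const
        (Or.inl (by simp only [id]; linarith [hz.2] : (0:ℝ) < 1 - id z).ne'))
      (by
        apply continuousOn_const.mul
        exact (continuousOn_const.sub continuousOn_id).rpow_const fun z hz =>
          Or.inl (by simp only [id]; linarith [hz.2] : (0:ℝ) < 1 - id z).ne')
    have hcongr : ∫ s in (0:ℝ)..t, (-1 * (a + 1) *
        (1 - (d0 x + ∫ ξ in (0:ℝ)..s, (1 - d' ξ x) ^ (-a) * y ξ x)) ^ (a + 1 - 1)) *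
          ((1 - d' s x) ^ (-a) * y s x) = ∫ s in (0:ℝ)..t, -(a + 1) * y s x := by
      apply intervalIntegral.integral_congr
      intro s hs
      rw [uIcc_of_le ht.1] at hs
      have hs' : s ∈ Icc 0 T := ⟨hs.1, hs.2.trans ht.2⟩
      have hp : 0 < 1 - d' s x := by linarith [(hm s hs').2]
      have e2 : (1 - d' s x) ^ a * (1 - d' s x) ^ (-a) = 1 := by
        rw [← Real.rpow_add hp]; simp
      simp only
      rw [← he s hs', add_sub_cancel_right]
      linear_combination (-(a + 1) * y s x) * e2
    rw [hcongr, ← he t ht] at hch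
    have hUt : U t x = (1 - d' t x) ^ (a + 1) := by
      simp only [U]; rw [hch]; ring
    have hp : 0 ≤ 1 - d' t x := by linarith [(hm t ht).2]
    simp only [d]
    rw [hUt, ← Real.rpow_mul hp, mul_one_div_cancel ha1, Real.rpow_one]
    ring
end
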